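/- Suppose that for every (α,β,γ) ∈ R₂ and every weighting w with (H₉,w) ∈ Tri(α,β,γ), the pair (H₉,w) is either not extremal or not vertex minimal. Then for all α, β, γ ∈ [0,1] with γ ≤ α and γ ≤ β: T_min(α,β,γ) = 0 if (α,β,γ) ∈ [0,1]³ \ R; T_min(α,β,γ) = 2√(αβ(1−γ)) + 2γ − 2 if (α,β,γ) ∈ R₂; and T_min(α,β,γ) = α+β+γ−2 otherwise. -/

import Mathlib

/-!
The upper bounds come from explicit weightings: of `H6` when `Δ ≥ 0`, of `H7` on `R₂`, and of a
triangle-free graph on seven vertices off `R`. The lower bounds are proved for all weighted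
tripartite graphs with edge weights in `[0, 1]` (`Cfg`), a class large enough to vary inside.
The bound `α + β + γ - 2 ≤ t` holds termwise. The main point is `Cfg.lower_bound`: with
`FF x y z = 2 * √(x * y * (1 - z)) + 2 * z - 2`, the triangle density is at least one of
`FF α β γ`, `FF β γ α`, `FF γ α β`. On `R₂`, where `γ` is the smallest density, the first of these
is the smallest (`FF_lt`).

To prove `Cfg.lower_bound`, consider the excess `t - min FF`. By Carathéodory's theorem each class
can be reduced to four vertices, so compactness gives a minimizer among all configurations
(`exists_minimizer`). Mixing in a small weight of new vertices with arbitrary neighbourhoods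
(`Cfg.perturb`) moves the densities and `t` in a convex set of directions, and separating the
derivatives of the excess along them from the negative orthant (`exists_multipliers`) yields first
order conditions with multipliers `X`, `Y`, `Z` dual to `α`, `β`, `γ` (`Cfg.kkt`). These form a
convex combination of the gradients of the active bounds, that is, of those attaining `min FF`.

The first order conditions force structure: a vertex whose density into one class is below the
corresponding multiplier is joined completely to the other class (`Cfg.KKT.full_A`,
`Cfg.KKT.full_B`). If in two of the classes every vertex has such a small density (`Cfg.NoCirc`),
the graph has a two-block structure, for which Cauchy-Schwarz gives one of the three bounds
(`Cfg.le_t_of_blocks`, `Cfg.KKT.le_t`). A convexity estimate (`Cfg.KKT.noCirc`) provides `NoCirc`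
for two classes when at most two bounds are active (`Cfg.Bad.one`, `Cfg.Bad.two`). If all three
bounds are active, the three densities coincide (`Cfg.Sym`); then either the same reasoning applies,
or an estimate for the weights of the vertices of small density (`Cfg.KKT.triple`) contradicts the
numerical inequality `symmetric_contra`.
-/

open Finset

/-- A tripartite graph on `n` vertices: each vertex is assigned one of
three classes, adjacency is symmetric, and edges only join distinct classes. -/
structure TriGraph (n : ℕ) where
  cls : Fin n → Fin 3
  adj : Fin n → Fin n → Bool
  symm : ∀ u v, adj u v = adj v u
  tripart : ∀ u v, adj u v = true → cls u ≠ cls v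

/-- The set of vertices in class `i`. -/
def classSet {n : ℕ} (G : TriGraph n) (i : Fin 3) : Finset (Fin n) :=
  Finset.univ.filter (fun v => G.cls v = i)

/-- A weighting of a tripartite graph: weights in `[0,1]` summing to `1`
on each class. -/
structure Weighting {n : ℕ} (G : TriGraph n) where
  w : Fin n → ℝ
  nonneg : ∀ v, 0 ≤ w v
  le_one : ∀ v, w v ≤ 1
  sum_one : ∀ i : Fin 3, ∑ v ∈ classSet G i, w v = 1

/-- Weighted edge density between classes `i` and `j`. -/
noncomputable def edgeDensity {n : ℕ} (G : TriGraph n) (w : Fin n → ℝ) (i j : Fin 3) : ℝ :=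
  ∑ x ∈ classSet G i, ∑ y ∈ classSet G j, if G.adj x y then w x * w y else 0

/-- Weighted triangle density. -/
noncomputable def triDensity {n : ℕ} (G : TriGraph n) (w : Fin n → ℝ) : ℝ :=
  ∑ a ∈ classSet G 0, ∑ b ∈ classSet G 1, ∑ c ∈ classSet G 2,
    if G.adj a b && G.adj a c && G.adj b c then w a * w b * w c else 0

/-- `(G,W) ∈ Tri(α,β,γ)`: the three edge densities are `α` (between B and C),
`β` (between A and C) and `γ` (between A and B), where A, B, C are classes 0, 1, 2. -/
def InTri {n : ℕ} (G : TriGraph n) (W : Weighting G) (α β γ : ℝ) : Prop :=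
  edgeDensity G W.w 1 2 = α ∧ edgeDensity G W.w 0 2 = β ∧ edgeDensity G W.w 0 1 = γ

/-- The minimal triangle density over all weighted tripartite graphs with
edge densities `α, β, γ`. -/
noncomputable def Tmin (α β γ : ℝ) : ℝ :=
  sInf { t : ℝ | ∃ (n : ℕ) (G : TriGraph n) (W : Weighting G),
    InTri G W α β γ ∧ triDensity G W.w = t }

/-- `(G,W)` is extremal: it lies in `Tri(α,β,γ)` and attains `Tmin`. -/
def Extremal {n : ℕ} (G : TriGraph n) (W : Weighting G) (α β γ : ℝ) : Prop :=
  InTri G W α β γ ∧ triDensity G W.w = Tmin α β γ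

/-- `(G,W)` is vertex minimal: no member of `Tri(α,β,γ)` with the same triangle
density has fewer vertices. -/
def VertexMinimal {n : ℕ} (G : TriGraph n) (W : Weighting G) (α β γ : ℝ) : Prop :=
  InTri G W α β γ ∧
    ¬ ∃ (m : ℕ) (G' : TriGraph m) (W' : Weighting G'),
        m < n ∧ InTri G' W' α β γ ∧ triDensity G' W'.w = triDensity G W.w

/-- Membership in the cube `[0,1]³`. -/
def inCube (α β γ : ℝ) : Prop :=
  α ∈ Set.Icc (0:ℝ) 1 ∧ β ∈ Set.Icc (0:ℝ) 1 ∧ γ ∈ Set.Icc (0:ℝ) 1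

/-- The region `R`. -/
def inR (α β γ : ℝ) : Prop :=
  inCube α β γ ∧ 1 < α * β + γ ∧ 1 < α * γ + β ∧ 1 < β * γ + α

/-- The discriminant `Δ(α,β,γ)`. -/
noncomputable def Delta (α β γ : ℝ) : ℝ :=
  α^2 + β^2 + γ^2 - 2*α*β - 2*α*γ - 2*β*γ + 4*α*β*γ

/-- The region `R₁ = {(α,β,γ) ∈ R : Δ ≥ 0}`. -/
def inR1 (α β γ : ℝ) : Prop := inR α β γ ∧ 0 ≤ Delta α β γ

/-- The region `R₂ = R \ R₁`. -/
def inR2 (α β γ : ℝ) : Prop := inR α β γ ∧ Delta α β γ < 0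

/-- Adjacency of a complete tripartite graph minus a given list of (non-)edges. -/
def mkAdj {n : ℕ} (cls : Fin n → Fin 3) (nonEdges : List (ℕ × ℕ)) : Fin n → Fin n → Bool :=
  fun u v => (cls u != cls v) &&
    !(nonEdges.contains (u.val, v.val) || nonEdges.contains (v.val, u.val))

/-- `H₆`: classes A = {0,1}, B = {2,3}, C = {4,5} (vertices aᵢ, bᵢ, cᵢ in order);
the complete tripartite graph `K_{2,2,2}` minus the edges a₂b₁, b₂c₁, a₁c₂. -/
def H6 : TriGraph 6 where
  cls := ![0,0,1,1,2,2]
  adj := mkAdj ![0,0,1,1,2,2] [(1,2),(3,4),(0,5)]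
  symm := by decide
  tripart := by decide

/-- `H₇`: classes A = {0,1}, B = {2,3}, C = {4,5,6};
`K_{2,2,3}` minus the edges a₂b₁, a₁c₂, a₁c₃, b₂c₁, b₂c₂. -/
def H7 : TriGraph 7 where
  cls := ![0,0,1,1,2,2,2]
  adj := mkAdj ![0,0,1,1,2,2,2] [(1,2),(0,5),(0,6),(3,4),(3,5)]
  symm := by decide
  tripart := by decide

/-- `H₇′`: classes A = {0,1}, B = {2,3,4}, C = {5,6};
`K_{2,3,2}` minus the edges a₂b₁, a₁c₂, b₂c₁, b₂c₂, b₃c₁. -/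
def H7' : TriGraph 7 where
  cls := ![0,0,1,1,1,2,2]
  adj := mkAdj ![0,0,1,1,1,2,2] [(1,2),(0,6),(3,5),(3,6),(4,5)]
  symm := by decide
  tripart := by decide

/-- `H₉`: classes A = {0,1,2}, B = {3,4,5}, C = {6,7,8};
`K_{3,3,3}` minus the 9-cycle a₁c₂, c₂b₂, b₂c₁, c₁b₃, b₃a₂, a₂b₁, b₁a₃, a₃c₃, c₃a₁. -/
def H9 : TriGraph 9 where
  cls := ![0,0,0,1,1,1,2,2,2]
  adj := mkAdj ![0,0,0,1,1,1,2,2,2] [(0,7),(4,7),(4,6),(5,6),(1,5),(1,3),(2,3),(2,8),(0,8)]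
  symm := by decide
  tripart := by decide

/-- `F₆`: classes A = {0,1}, B = {2,3}, C = {4,5};
`K_{2,2,2}` minus the edges a₁b₁, a₁c₁, b₁c₁, a₂c₂, b₂c₂. -/
def F6 : TriGraph 6 where
  cls := ![0,0,1,1,2,2]
  adj := mkAdj ![0,0,1,1,2,2] [(0,2),(0,4),(2,4),(1,5),(3,5)]
  symm := by decide
  tripart := by decide

/-- Strong isomorphism of tripartite graphs: a graph isomorphism mapping
vertex classes onto vertex classes. -/
def StronglyIso {n m : ℕ} (G : TriGraph n) (H : TriGraph m) : Prop :=
  ∃ (e : Fin n ≃ Fin m) (σ : Fin 3 ≃ Fin 3),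
    (∀ u v, H.adj (e u) (e v) = G.adj u v) ∧ ∀ v, H.cls (e v) = σ (G.cls v)

/-- A double weighting: a function `p` assigning each edge a value in `(0,1]`. -/
structure DWeight {n : ℕ} (G : TriGraph n) where
  p : Fin n → Fin n → ℝ
  symm : ∀ u v, p u v = p v u
  pos : ∀ u v, G.adj u v = true → 0 < p u v
  le_one : ∀ u v, G.adj u v = true → p u v ≤ 1

/-- Edge density of a doubly-weighted tripartite graph. -/
noncomputable def dEdgeDensity {n : ℕ} (G : TriGraph n) (w : Fin n → ℝ)
    (p : Fin n → Fin n → ℝ) (i j : Fin 3) : ℝ :=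
  ∑ x ∈ classSet G i, ∑ y ∈ classSet G j, if G.adj x y then w x * w y * p x y else 0

/-- Triangle density of a doubly-weighted tripartite graph. -/
noncomputable def dTriDensity {n : ℕ} (G : TriGraph n) (w : Fin n → ℝ)
    (p : Fin n → Fin n → ℝ) : ℝ :=
  ∑ a ∈ classSet G 0, ∑ b ∈ classSet G 1, ∑ c ∈ classSet G 2,
    if G.adj a b && G.adj a c && G.adj b c then
      w a * w b * w c * p a b * p a c * p b c
    else 0

/-- `C_{ab}`: the vertices of class C (class 2) adjacent to both `a` and `b`. -/
def Cset {n : ℕ} (G : TriGraph n) (a b : Fin n) : Finset (Fin n) :=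
  Finset.univ.filter (fun c => G.cls c = 2 ∧ G.adj a c = true ∧ G.adj b c = true)

/-- Edge density of a simple (unweighted) tripartite graph between classes `i` and `j`. -/
noncomputable def simpleEdgeDensity {n : ℕ} (G : TriGraph n) (i j : Fin 3) : ℝ :=
  (∑ x ∈ classSet G i, ∑ y ∈ classSet G j, if G.adj x y then (1:ℝ) else 0) /
    ((classSet G i).card * (classSet G j).card)

/-- Triangle density of a simple (unweighted) tripartite graph. -/
noncomputable def simpleTriDensity {n : ℕ} (G : TriGraph n) : ℝ :=
  (∑ a ∈ classSet G 0, ∑ b ∈ classSet G 1, ∑ c ∈ classSet G 2,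
    if G.adj a b && G.adj a c && G.adj b c then (1:ℝ) else 0) /
    ((classSet G 0).card * (classSet G 1).card * (classSet G 2).card)

namespace TriDens

/-! ### Configurations and the linear bound -/

/-- A weighted tripartite graph with edge weights: `a`, `b`, `c` are the vertex weights, and
`p`, `q`, `r` are edge weights in `[0, 1]` between `B` and `C`, `C` and `A`, `A` and `B`. The cyclic
order makes `rot`, the cyclic renaming of the classes, an exact symmetry of order three. -/
structure Cfg (A B C : Type) [Fintype A] [Fintype B] [Fintype C] where
  a : A → ℝ
  b : B → ℝ
  c : C → ℝ
  p : B → C → ℝ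
  q : C → A → ℝ
  r : A → B → ℝ
  ha : ∀ i, 0 ≤ a i
  hb : ∀ j, 0 ≤ b j
  hc : ∀ k, 0 ≤ c k
  sa : ∑ i, a i = 1
  sb : ∑ j, b j = 1
  sc : ∑ k, c k = 1
  hp : ∀ j k, p j k ∈ Set.Icc (0:ℝ) 1
  hq : ∀ k i, q k i ∈ Set.Icc (0:ℝ) 1
  hr : ∀ i j, r i j ∈ Set.Icc (0:ℝ) 1

namespace Cfg

variable {A B C : Type} [Fintype A] [Fintype B] [Fintype C]

/-- Density between `B` and `C`. -/
noncomputable def al (G : Cfg A B C) : ℝ := ∑ j, ∑ k, G.b j * G.c k * G.p j k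
/-- Density between `C` and `A`. -/
noncomputable def be (G : Cfg A B C) : ℝ := ∑ k, ∑ i, G.c k * G.a i * G.q k i
/-- Density between `A` and `B`. -/
noncomputable def ga (G : Cfg A B C) : ℝ := ∑ i, ∑ j, G.a i * G.b j * G.r i j
/-- Triangle density. -/
noncomputable def t (G : Cfg A B C) : ℝ :=
  ∑ i, ∑ j, ∑ k, G.a i * G.b j * G.c k * (G.p j k * G.q k i * G.r i j)

/-- The same configuration with the classes cyclically renamed. -/
def rot (G : Cfg A B C) : Cfg B C A where
  a := G.b
  b := G.c
  c := G.a
  p := G.q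
  q := G.r
  r := G.p
  ha := G.hb
  hb := G.hc
  hc := G.ha
  sa := G.sb
  sb := G.sc
  sc := G.sa
  hp := G.hq
  hq := G.hr
  hr := G.hp

theorem rot_al (G : Cfg A B C) : G.rot.al = G.be := rfl
theorem rot_be (G : Cfg A B C) : G.rot.be = G.ga := rfl
theorem rot_ga (G : Cfg A B C) : G.rot.ga = G.al := rfl

theorem rot_t (G : Cfg A B C) : G.rot.t = G.t := by
  unfold t rot
  simp only
  conv_rhs => rw [Finset.sum_comm]
  refine Finset.sum_congr rfl fun j _ => ?_
  rw [Finset.sum_comm]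
  refine Finset.sum_congr rfl fun i _ => Finset.sum_congr rfl fun k _ => ?_
  ring

theorem rot_rot_rot (G : Cfg A B C) : G.rot.rot.rot = G := rfl

theorem t_nonneg (G : Cfg A B C) : 0 ≤ G.t := by
  refine Finset.sum_nonneg fun i _ => Finset.sum_nonneg fun j _ => Finset.sum_nonneg fun k _ => ?_
  have h1 := (G.hp j k).1
  have h2 := (G.hq k i).1
  have h3 := (G.hr i j).1
  have := G.ha i
  have := G.hb j
  have := G.hc k
  positivity

theorem al_nonneg (G : Cfg A B C) : 0 ≤ G.al := by
  refine Finset.sum_nonneg fun j _ => Finset.sum_nonneg fun k _ => ?_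
  have h1 := (G.hp j k).1
  have := G.hb j
  have := G.hc k
  positivity

theorem al_le (G : Cfg A B C) : G.al ≤ 1 := by
  have : G.al ≤ ∑ j, ∑ k, G.b j * G.c k := by
    refine Finset.sum_le_sum fun j _ => Finset.sum_le_sum fun k _ => ?_
    exact mul_le_of_le_one_right (mul_nonneg (G.hb j) (G.hc k)) (G.hp j k).2
  rw [← Finset.sum_mul_sum, G.sb, G.sc] at this
  linarith

theorem be_nonneg (G : Cfg A B C) : 0 ≤ G.be := G.rot.al_nonneg
theorem ga_nonneg (G : Cfg A B C) : 0 ≤ G.ga := G.rot.rot.al_nonneg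
theorem be_le (G : Cfg A B C) : G.be ≤ 1 := G.rot.al_le
theorem ga_le (G : Cfg A B C) : G.ga ≤ 1 := G.rot.rot.al_le

/-- Density of the vertex `k` of `C` into `A`. -/
noncomputable def dA (G : Cfg A B C) (k : C) : ℝ := ∑ i, G.a i * G.q k i
/-- Density of the vertex `k` of `C` into `B`. -/
noncomputable def dB (G : Cfg A B C) (k : C) : ℝ := ∑ j, G.b j * G.p j k
/-- Triangle density through a vertex with neighbourhood functions `S` on `A` and `T` on `B`. -/
noncomputable def val (G : Cfg A B C) (S : A → ℝ) (T : B → ℝ) : ℝ :=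
  ∑ i, ∑ j, G.a i * G.b j * (S i * T j * G.r i j)

theorem be_eq (G : Cfg A B C) : G.be = ∑ k, G.c k * G.dA k := by
  unfold be dA
  refine Finset.sum_congr rfl fun k _ => ?_
  rw [Finset.mul_sum]
  exact Finset.sum_congr rfl fun i _ => by ring

theorem al_eq (G : Cfg A B C) : G.al = ∑ k, G.c k * G.dB k := by
  unfold al dB
  rw [Finset.sum_comm]
  refine Finset.sum_congr rfl fun k _ => ?_
  rw [Finset.mul_sum]
  exact Finset.sum_congr rfl fun i _ => by ring

theorem t_eq (G : Cfg A B C) :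
    G.t = ∑ k, G.c k * G.val (G.q k) (fun j => G.p j k) := by
  unfold t val
  simp only [Finset.mul_sum]
  rw [Finset.sum_comm' (t' := univ) (s' := fun _ => univ) (by simp)]
  conv_rhs => rw [Finset.sum_comm]
  rw [Finset.sum_comm]
  refine Finset.sum_congr rfl fun i _ => ?_
  conv_rhs => rw [Finset.sum_comm]
  refine Finset.sum_congr rfl fun j _ => Finset.sum_congr rfl fun k _ => ?_
  ring

/-- Union bound: a triple fails to be a triangle only if one of its three pairs is not joined. -/
theorem val_ge (G : Cfg A B C) (S : A → ℝ) (T : B → ℝ) (hS : ∀ i, S i ∈ Set.Icc (0:ℝ) 1)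
    (hT : ∀ j, T j ∈ Set.Icc (0:ℝ) 1) :
    ∑ j, G.b j * T j + ∑ i, G.a i * S i + G.ga - 2 ≤ G.val S T := by
  have h1 : ∑ j, G.b j * T j = ∑ i, ∑ j, G.a i * G.b j * T j := by
    simp only [mul_assoc, ← Finset.mul_sum, ← Finset.sum_mul, G.sa, one_mul]
  have h2 : ∑ i, G.a i * S i = ∑ i, ∑ j, G.a i * G.b j * S i := by
    simp only [mul_right_comm, ← Finset.mul_sum, G.sb, mul_one]
  have h3 : (2:ℝ) = ∑ i, ∑ j, G.a i * G.b j * 2 := by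
    simp only [← Finset.sum_mul, ← Finset.mul_sum, G.sa, G.sb, mul_one, one_mul]
  rw [h1, h2, h3]
  unfold ga val
  simp only [← Finset.sum_add_distrib, ← Finset.sum_sub_distrib]
  refine Finset.sum_le_sum fun i _ => Finset.sum_le_sum fun j _ => ?_
  have hab := mul_nonneg (G.ha i) (G.hb j)
  obtain ⟨s0, s1⟩ := hS i
  obtain ⟨t0, t1⟩ := hT j
  obtain ⟨r0, r1⟩ := G.hr i j
  have : T j + S i + G.r i j - 2 ≤ S i * T j * G.r i j := by
    nlinarith [mul_nonneg (sub_nonneg.2 s1) (sub_nonneg.2 t1),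
      mul_nonneg (sub_nonneg.2 r1) (sub_nonneg.2 (mul_le_one₀ s1 t0 t1))]
  calc _ = G.a i * G.b j * (T j + S i + G.r i j - 2) := by ring
    _ ≤ _ := mul_le_mul_of_nonneg_left this hab

theorem t_ge (G : Cfg A B C) : G.al + G.be + G.ga - 2 ≤ G.t := by
  rw [t_eq, al_eq, be_eq]
  have h : G.ga - 2 = ∑ k, G.c k * (G.ga - 2) := by rw [← Finset.sum_mul, G.sc, one_mul]
  rw [add_sub_assoc, h, ← Finset.sum_add_distrib, ← Finset.sum_add_distrib]
  refine Finset.sum_le_sum fun k _ => ?_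
  have := mul_le_mul_of_nonneg_left
    (G.val_ge (G.q k) (fun j => G.p j k) (G.hq k) (fun j => G.hp j k)) (G.hc k)
  unfold dA dB
  linarith

end Cfg

/-! ### Existence of minimizers -/

namespace Cfg
variable {A B C : Type} [Fintype A] [Fintype B] [Fintype C]

/-- Carathéodory's theorem applied to the triples (density into `B`, density into `A`, triangle
density) of the vertices of `C`: four vertices of `C`, of positive weight, suffice to realize the
same densities. -/
theorem reduceC (G : Cfg A B C) : ∃ (K : Type) (_ : Fintype K) (G' : Cfg A B K),
    Fintype.card K ≤ 4 ∧ (∀ k, 0 < G'.c k) ∧ G'.a = G.a ∧ G'.b = G.b ∧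
    G'.al = G.al ∧ G'.be = G.be ∧ G'.ga = G.ga ∧ G'.t = G.t := by
  classical
  let P : C → ℝ × ℝ × ℝ := fun k => (G.dB k, G.dA k, G.val (G.q k) (fun j => G.p j k))
  have hmem : ∑ k, G.c k • P k ∈ convexHull ℝ (Set.range P) :=
    (convex_convexHull ℝ _).sum_mem (fun k _ => G.hc k) G.sc
      fun k _ => subset_convexHull ℝ _ ⟨k, rfl⟩
  obtain ⟨K, hK, z, w, hz, haff, hw, hw1, hsum⟩ := eq_pos_convex_span_of_mem_convexHull hmem
  have hz' : ∀ i, ∃ k, P k = z i := fun i => hz ⟨i, rfl⟩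
  choose f hf using hz'
  have hcard : Fintype.card K ≤ 4 := by
    have h1 := haff.card_le_finrank_succ
    have h2 : Module.finrank ℝ (vectorSpan ℝ (Set.range z)) ≤ Module.finrank ℝ (ℝ × ℝ × ℝ) :=
      Submodule.finrank_le _
    have h3 : Module.finrank ℝ (ℝ × ℝ × ℝ) = 3 := by simp
    omega
  have hs : ∑ i, w i • P (f i) = ∑ k, G.c k • P k := by
    rw [← hsum]; exact Finset.sum_congr rfl fun i _ => by rw [hf]
  let G' : Cfg A B K :=
    { a := G.a, b := G.b, c := w, p := fun j i => G.p j (f i), q := fun i => G.q (f i), r := G.r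
      ha := G.ha, hb := G.hb, hc := fun i => (hw i).le, sa := G.sa, sb := G.sb, sc := hw1
      hp := fun j i => G.hp j (f i), hq := fun i => G.hq (f i), hr := G.hr }
  refine ⟨K, hK, G', hcard, hw, rfl, rfl, ?_, ?_, rfl, ?_⟩
  · rw [al_eq, al_eq]
    have := congrArg (fun v => v.1) hs
    simp only [Prod.fst_sum, P, Prod.smul_fst, smul_eq_mul] at this
    exact this
  · rw [be_eq, be_eq]
    have := congrArg (fun v => v.2.1) hs
    simp only [Prod.fst_sum, Prod.snd_sum, P, Prod.smul_fst, Prod.smul_snd, smul_eq_mul] at this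
    exact this
  · rw [t_eq, t_eq]
    have := congrArg (fun v => v.2.2) hs
    simp only [Prod.fst_sum, Prod.snd_sum, P, Prod.smul_fst, Prod.smul_snd, smul_eq_mul] at this
    exact this

/-- All three classes can be reduced to at most four vertices of positive weight without
changing the densities. -/
theorem reduce (G : Cfg A B C) : ∃ (I J K : Type) (_ : Fintype I) (_ : Fintype J) (_ : Fintype K)
    (G' : Cfg I J K), Fintype.card I ≤ 4 ∧ Fintype.card J ≤ 4 ∧ Fintype.card K ≤ 4 ∧
    (∀ i, 0 < G'.a i) ∧ (∀ j, 0 < G'.b j) ∧ (∀ k, 0 < G'.c k) ∧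
    G'.al = G.al ∧ G'.be = G.be ∧ G'.ga = G.ga ∧ G'.t = G.t := by
  obtain ⟨K, _, G1, hK, hc, -, -, h1, h2, h3, h4⟩ := G.reduceC
  obtain ⟨I, _, G2, hI, ha, hb1, hc1, i1, i2, i3, i4⟩ := G1.rot.reduceC
  obtain ⟨J, _, G3, hJ, hb, hc2, ha2, j1, j2, j3, j4⟩ := G2.rot.reduceC
  have hcpos : ∀ k, 0 < G2.b k := fun k => by rw [hc1]; exact hc k
  refine ⟨I, J, K, _, _, _, G3.rot, hI, hJ, hK, ?_, ?_, ?_, ?_, ?_, ?_, ?_⟩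
  · intro i
    change 0 < G3.b i
    rw [ha2]; exact ha i
  · exact hb
  · intro k
    change 0 < G3.a k
    rw [hc2]; exact hcpos k
  · rw [rot_al, j2, rot_be, i3, rot_ga, h1]
  · rw [rot_be, j3, rot_ga, i1, rot_al, h2]
  · rw [rot_ga, j1, rot_al, i2, rot_be, h3]
  · rw [rot_t, j4, rot_t, i4, rot_t, h4]

/-- Adding vertices of weight zero. -/
theorem pad {I J K : Type} [Fintype I] [Fintype J] [Fintype K]
    (G : Cfg A B C) (e : A → I) (he : Function.Injective e) (f : B → J) (hf : Function.Injective f)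
    (g : C → K) (hg : Function.Injective g) :
    ∃ G' : Cfg I J K, G'.al = G.al ∧ G'.be = G.be ∧ G'.ga = G.ga ∧ G'.t = G.t := by
  have hA : Nonempty A := by
    by_contra h; rw [not_nonempty_iff] at h; simpa using G.sa
  have hB : Nonempty B := by
    by_contra h; rw [not_nonempty_iff] at h; simpa using G.sb
  have hC : Nonempty C := by
    by_contra h; rw [not_nonempty_iff] at h; simpa using G.sc
  let ei := Function.invFun e
  let fi := Function.invFun f
  let gi := Function.invFun g
  have hei : ∀ i, ei (e i) = i := Function.leftInverse_invFun he
  have hfi : ∀ i, fi (f i) = i := Function.leftInverse_invFun hf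
  have hgi : ∀ i, gi (g i) = i := Function.leftInverse_invFun hg
  have xa : ∀ i, Function.extend e G.a 0 (e i) = G.a i := fun i => he.extend_apply _ _ _
  have xb : ∀ i, Function.extend f G.b 0 (f i) = G.b i := fun i => hf.extend_apply _ _ _
  have xc : ∀ i, Function.extend g G.c 0 (g i) = G.c i := fun i => hg.extend_apply _ _ _
  have za : ∀ i, i ∉ Set.range e → Function.extend e G.a 0 i = 0 := fun i hi => by
    simp [Function.extend, Set.mem_range] at hi ⊢; simp [hi]
  have zb : ∀ i, i ∉ Set.range f → Function.extend f G.b 0 i = 0 := fun i hi => by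
    simp [Function.extend, Set.mem_range] at hi ⊢; simp [hi]
  have zc : ∀ i, i ∉ Set.range g → Function.extend g G.c 0 i = 0 := fun i hi => by
    simp [Function.extend, Set.mem_range] at hi ⊢; simp [hi]
  let G' : Cfg I J K :=
    { a := Function.extend e G.a 0, b := Function.extend f G.b 0, c := Function.extend g G.c 0
      p := fun j k => G.p (fi j) (gi k), q := fun k i => G.q (gi k) (ei i)
      r := fun i j => G.r (ei i) (fi j)
      ha := fun i => by
        by_cases h : i ∈ Set.range e
        · obtain ⟨x, rfl⟩ := h; rw [xa]; exact G.ha x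
        · rw [za i h]
      hb := fun i => by
        by_cases h : i ∈ Set.range f
        · obtain ⟨x, rfl⟩ := h; rw [xb]; exact G.hb x
        · rw [zb i h]
      hc := fun i => by
        by_cases h : i ∈ Set.range g
        · obtain ⟨x, rfl⟩ := h; rw [xc]; exact G.hc x
        · rw [zc i h]
      sa := by rw [← Fintype.sum_of_injective e he G.a _ za (fun i => (xa i).symm), G.sa]
      sb := by rw [← Fintype.sum_of_injective f hf G.b _ zb (fun i => (xb i).symm), G.sb]
      sc := by rw [← Fintype.sum_of_injective g hg G.c _ zc (fun i => (xc i).symm), G.sc]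
      hp := fun j k => G.hp _ _
      hq := fun j k => G.hq _ _
      hr := fun j k => G.hr _ _ }
  refine ⟨G', ?_, ?_, ?_, ?_⟩
  · refine (Fintype.sum_of_injective f hf _ _ (fun j hj => ?_) fun j => ?_).symm
    · simp [G', zb j hj]
    · refine Fintype.sum_of_injective g hg _ _ (fun j hj => ?_) fun k => ?_
      · simp [G', zc j hj]
      · simp [G', xb, xc, hfi, hgi]
  · refine (Fintype.sum_of_injective g hg _ _ (fun j hj => ?_) fun j => ?_).symm
    · simp [G', zc j hj]
    · refine Fintype.sum_of_injective e he _ _ (fun j hj => ?_) fun k => ?_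
      · simp [G', za j hj]
      · simp [G', xa, xc, hei, hgi]
  · refine (Fintype.sum_of_injective e he _ _ (fun j hj => ?_) fun j => ?_).symm
    · simp [G', za j hj]
    · refine Fintype.sum_of_injective f hf _ _ (fun j hj => ?_) fun k => ?_
      · simp [G', zb j hj]
      · simp [G', xa, xb, hei, hfi]
  · refine (Fintype.sum_of_injective e he _ _ (fun j hj => ?_) fun i => ?_).symm
    · simp [G', za j hj]
    · refine Fintype.sum_of_injective f hf _ _ (fun j hj => ?_) fun j => ?_
      · simp [G', zb j hj]
      · refine Fintype.sum_of_injective g hg _ _ (fun j hj => ?_) fun k => ?_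
        · simp [G', zc j hj]
        · simp [G', xa, xb, xc, hei, hfi, hgi]

end Cfg

/-- Every continuous function of the densities attains its minimum over all configurations, at
one with positive weights. -/
theorem exists_minimizer (Φ : ℝ → ℝ → ℝ → ℝ → ℝ)
    (hΦ : Continuous fun x : ℝ × ℝ × ℝ × ℝ => Φ x.1 x.2.1 x.2.2.1 x.2.2.2) :
    ∃ (I J K : Type) (_ : Fintype I) (_ : Fintype J) (_ : Fintype K) (G : Cfg I J K),
      (∀ i, 0 < G.a i) ∧ (∀ j, 0 < G.b j) ∧ (∀ k, 0 < G.c k) ∧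
      ∀ (A B C : Type) [Fintype A] [Fintype B] [Fintype C] (H : Cfg A B C),
        Φ G.al G.be G.ga G.t ≤ Φ H.al H.be H.ga H.t := by
  let F := Fin 4
  let M : Set (F → F → ℝ) := Set.univ.pi fun _ => Set.univ.pi fun _ => Set.Icc (0:ℝ) 1
  have hM : IsCompact M := isCompact_univ_pi fun _ => isCompact_univ_pi fun _ => isCompact_Icc
  let D : Set ((F → ℝ) × (F → ℝ) × (F → ℝ) × (F → F → ℝ) × (F → F → ℝ) × (F → F → ℝ)) :=
    stdSimplex ℝ F ×ˢ stdSimplex ℝ F ×ˢ stdSimplex ℝ F ×ˢ M ×ˢ M ×ˢ M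
  have hD : IsCompact D :=
    (isCompact_stdSimplex ℝ F).prod <| (isCompact_stdSimplex ℝ F).prod <|
      (isCompact_stdSimplex ℝ F).prod <| hM.prod <| hM.prod hM
  let f : ((F → ℝ) × (F → ℝ) × (F → ℝ) × (F → F → ℝ) × (F → F → ℝ) × (F → F → ℝ)) → ℝ :=
    fun ⟨a, b, c, p, q, r⟩ => Φ (∑ j, ∑ k, b j * c k * p j k) (∑ k, ∑ i, c k * a i * q k i)
      (∑ i, ∑ j, a i * b j * r i j) (∑ i, ∑ j, ∑ k, a i * b j * c k * (p j k * q k i * r i j))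
  have hf : Continuous f := by
    refine hΦ.comp (g := fun x => Φ x.1 x.2.1 x.2.2.1 x.2.2.2)
      (f := fun x : ((F → ℝ) × (F → ℝ) × (F → ℝ) × (F → F → ℝ) × (F → F → ℝ) × (F → F → ℝ)) =>
        ((∑ j, ∑ k, x.2.1 j * x.2.2.1 k * x.2.2.2.1 j k : ℝ),
          (∑ k, ∑ i, x.2.2.1 k * x.1 i * x.2.2.2.2.1 k i : ℝ),
          (∑ i, ∑ j, x.1 i * x.2.1 j * x.2.2.2.2.2 i j : ℝ),
          (∑ i, ∑ j, ∑ k, x.1 i * x.2.1 j * x.2.2.1 k *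
            (x.2.2.2.1 j k * x.2.2.2.2.1 k i * x.2.2.2.2.2 i j) : ℝ))) ?_
    fun_prop
  have toD : ∀ H : Cfg F F F, (H.a, H.b, H.c, H.p, H.q, H.r) ∈ D := fun H =>
    ⟨⟨H.ha, H.sa⟩, ⟨H.hb, H.sb⟩, ⟨H.hc, H.sc⟩, fun i _ j _ => H.hp i j, fun i _ j _ => H.hq i j,
      fun i _ j _ => H.hr i j⟩
  -- one vertex in each class and no edges: the set of configurations is nonempty
  let H0 : Cfg Unit Unit Unit :=
    { a := fun _ => 1, b := fun _ => 1, c := fun _ => 1, p := fun _ _ => 0, q := fun _ _ => 0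
      r := fun _ _ => 0
      ha := by simp, hb := by simp, hc := by simp, sa := by simp, sb := by simp, sc := by simp
      hp := by simp, hq := by simp, hr := by simp }
  obtain ⟨H1, -⟩ := H0.pad (fun _ => (0 : F)) (fun _ _ _ => rfl) (fun _ => (0 : F))
    (fun _ _ _ => rfl) (fun _ => (0 : F)) (fun _ _ _ => rfl)
  obtain ⟨⟨a, b, c, p, q, r⟩, ⟨ha, hb, hc, hp, hq, hr⟩, hmin⟩ :=
    hD.exists_isMinOn ⟨_, toD H1⟩ hf.continuousOn
  let G : Cfg F F F :=
    { a := a, b := b, c := c, p := p, q := q, r := r, ha := ha.1, hb := hb.1, hc := hc.1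
      sa := ha.2, sb := hb.2, sc := hc.2
      hp := fun i j => hp i trivial j trivial, hq := fun i j => hq i trivial j trivial
      hr := fun i j => hr i trivial j trivial }
  obtain ⟨I, J, K, iI, iJ, iK, G', -, -, -, pa, pb, pc, h1, h2, h3, h4⟩ := G.reduce
  refine ⟨I, J, K, iI, iJ, iK, G', pa, pb, pc, ?_⟩
  intro A B C _ _ _ H
  obtain ⟨I', J', K', _, _, _, H', cI, cJ, cK, -, -, -, k1, k2, k3, k4⟩ := H.reduce
  have emb : ∀ (X : Type) [Fintype X], Fintype.card X ≤ 4 → ∃ e : X → F, Function.Injective e := by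
    intro X _ hX
    obtain ⟨e⟩ := Function.Embedding.nonempty_of_card_le (α := X) (β := F) (by simpa [F] using hX)
    exact ⟨e, e.injective⟩
  obtain ⟨e, he⟩ := emb I' cI
  obtain ⟨f', hf'⟩ := emb J' cJ
  obtain ⟨g, hg⟩ := emb K' cK
  obtain ⟨H'', l1, l2, l3, l4⟩ := H'.pad e he f' hf' g hg
  rw [h1, h2, h3, h4, ← k1, ← k2, ← k3, ← k4, ← l1, ← l2, ← l3, ← l4]
  exact hmin (toD H'')

/-! ### Perturbations -/

namespace Cfg
variable {A B C : Type} [Fintype A] [Fintype B] [Fintype C]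

/-- The triples `(density into B, density into A, triangle density)` of the vertices that could be
added to the class `C`. -/
def probes (G : Cfg A B C) : Set (ℝ × ℝ × ℝ) :=
  {v | ∃ (S : A → ℝ) (T : B → ℝ), (∀ i, S i ∈ Set.Icc (0:ℝ) 1) ∧ (∀ j, T j ∈ Set.Icc (0:ℝ) 1) ∧
    v = (∑ j, G.b j * T j, ∑ i, G.a i * S i, G.val S T)}

/-- The convex hull of the probes: what mixtures of new vertices in `C` can achieve. -/
def Q (G : Cfg A B C) : Set (ℝ × ℝ × ℝ) := convexHull ℝ G.probes

theorem self_mem_Q (G : Cfg A B C) : (G.al, G.be, G.t) ∈ G.Q := by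
  have h : ∑ k, G.c k • ((G.dB k, G.dA k, G.val (G.q k) (fun j => G.p j k)) : ℝ × ℝ × ℝ) ∈
      convexHull ℝ G.probes :=
    (convex_convexHull ℝ _).sum_mem (fun k _ => G.hc k) G.sc
      fun k _ => subset_convexHull ℝ _ ⟨G.q k, fun j => G.p j k, G.hq k, fun j => G.hp j k, rfl⟩
  have e : ∑ k, G.c k • ((G.dB k, G.dA k, G.val (G.q k) (fun j => G.p j k)) : ℝ × ℝ × ℝ) =
      (G.al, G.be, G.t) := by
    rw [al_eq, be_eq, t_eq]
    ext <;> simp [Prod.fst_sum, Prod.snd_sum]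
  rw [← e]; exact h

/-- Transport of convex hulls of probes along a linear map. -/
theorem Q_map {A' B' C' : Type} [Fintype A'] [Fintype B'] [Fintype C'] (G : Cfg A B C)
    (H : Cfg A' B' C') (L : (ℝ × ℝ × ℝ) →ₗ[ℝ] (ℝ × ℝ × ℝ))
    (h : ∀ v ∈ G.probes, L v ∈ H.probes) {v : ℝ × ℝ × ℝ} (hv : v ∈ G.Q) : L v ∈ H.Q := by
  have h1 : L v ∈ L '' convexHull ℝ G.probes := ⟨v, hv, rfl⟩
  rw [L.image_convexHull] at h1
  exact convexHull_mono (by rintro _ ⟨u, hu, rfl⟩; exact h u hu) h1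

/-- The linear map multiplying coordinates by constants. -/
def diagMap (x y z : ℝ) : (ℝ × ℝ × ℝ) →ₗ[ℝ] (ℝ × ℝ × ℝ) where
  toFun v := (x * v.1, y * v.2.1, z * v.2.2)
  map_add' u v := by ext <;> simp [mul_add]
  map_smul' m u := by ext <;> simp [mul_left_comm]

/-- A mixture of new vertices may be added to `C` with total weight `ε`. Probes at the other two
classes extend to the new configuration by having no edges to the new vertices. -/
theorem addC (G : Cfg A B C) {v : ℝ × ℝ × ℝ} (hv : v ∈ G.Q) {ε : ℝ} (h0 : 0 ≤ ε) (h1 : ε ≤ 1) :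
    ∃ (C' : Type) (_ : Fintype C') (H : Cfg A B C'),
      H.al = (1 - ε) * G.al + ε * v.1 ∧ H.be = (1 - ε) * G.be + ε * v.2.1 ∧ H.ga = G.ga ∧
      H.t = (1 - ε) * G.t + ε * v.2.2 ∧
      (∀ u ∈ G.rot.Q, ((1 - ε) * u.1, u.2.1, (1 - ε) * u.2.2) ∈ H.rot.Q) ∧
      (∀ u ∈ G.rot.rot.Q, (u.1, (1 - ε) * u.2.1, (1 - ε) * u.2.2) ∈ H.rot.rot.Q) := by
  obtain ⟨J, iJ, w, z, hw, hw1, hz, hzv⟩ := mem_convexHull_iff_exists_fintype.1 hv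
  choose S T hS hT hST using hz
  have h0' : 0 ≤ 1 - ε := by linarith
  let H : Cfg A B (C ⊕ J) :=
    { a := G.a, b := G.b, c := Sum.elim (fun k => (1 - ε) * G.c k) (fun j => ε * w j)
      p := fun j => Sum.elim (G.p j) (fun l => T l j)
      q := Sum.elim G.q S
      r := G.r
      ha := G.ha, hb := G.hb
      hc := by
        rintro (k | l)
        · exact mul_nonneg h0' (G.hc k)
        · exact mul_nonneg h0 (hw l)
      sa := G.sa, sb := G.sb
      sc := by simp [Fintype.sum_sum_type, ← Finset.mul_sum, G.sc, hw1]
      hp := by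
        rintro j (k | l)
        · exact G.hp j k
        · exact hT l j
      hq := by
        rintro (k | l) i
        · exact G.hq k i
        · exact hS l i
      hr := G.hr }
  have hz1 : ∀ l, (z l).1 = ∑ j, G.b j * T l j := fun l => by rw [hST]
  have hz2 : ∀ l, (z l).2.1 = ∑ i, G.a i * S l i := fun l => by rw [hST]
  have hz3 : ∀ l, (z l).2.2 = G.val (S l) (T l) := fun l => by rw [hST]
  refine ⟨C ⊕ J, inferInstance, H, ?_, ?_, rfl, ?_, ?_, ?_⟩
  · rw [al_eq, al_eq, Fintype.sum_sum_type, ← hzv]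
    simp only [Prod.fst_sum, Prod.smul_fst, smul_eq_mul, hz1, Finset.mul_sum (s := univ), ← mul_assoc]
    simp [H, dB, Finset.mul_sum, mul_assoc]
  · rw [be_eq, be_eq, Fintype.sum_sum_type, ← hzv]
    simp only [Prod.fst_sum, Prod.snd_sum, Prod.smul_fst, Prod.smul_snd, smul_eq_mul, hz2]
    simp [H, dA, Finset.mul_sum, mul_assoc]
  · rw [t_eq, t_eq, Fintype.sum_sum_type, ← hzv]
    simp only [Prod.fst_sum, Prod.snd_sum, Prod.smul_fst, Prod.smul_snd, smul_eq_mul, hz3]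
    simp only [H, val, Finset.mul_sum, mul_assoc, Sum.elim_inl, Sum.elim_inr]
  · intro u hu
    have := Q_map G.rot H.rot (diagMap (1 - ε) 1 (1 - ε)) ?_ hu
    · simpa [diagMap] using this
    · rintro _ ⟨S', T', hS', hT', rfl⟩
      refine ⟨S', Sum.elim T' (fun _ => 0), hS', ?_, ?_⟩
      · rintro (k | l)
        · exact hT' k
        · simp
      · simp only [diagMap, rot, val, H, LinearMap.coe_mk, AddHom.coe_mk, Fintype.sum_sum_type,
          Sum.elim_inl, Sum.elim_inr, mul_zero, zero_mul, Finset.sum_const_zero, add_zero, one_mul,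
          Finset.mul_sum, Prod.mk.injEq, true_and]
        refine ⟨Finset.sum_congr rfl fun _ _ => by ring,
          Finset.sum_congr rfl fun _ _ => Finset.sum_congr rfl fun _ _ => by ring⟩
  · intro u hu
    have := Q_map G.rot.rot H.rot.rot (diagMap 1 (1 - ε) (1 - ε)) ?_ hu
    · simpa [diagMap] using this
    · rintro _ ⟨S', T', hS', hT', rfl⟩
      refine ⟨Sum.elim S' (fun _ => 0), T', ?_, hT', ?_⟩
      · rintro (k | l)
        · exact hS' k
        · simp
      · simp only [diagMap, rot, val, H, LinearMap.coe_mk, AddHom.coe_mk, Fintype.sum_sum_type,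
          Sum.elim_inl, Sum.elim_inr, mul_zero, zero_mul, Finset.sum_const_zero, add_zero, one_mul,
          Finset.mul_sum, Prod.mk.injEq, true_and]
        refine ⟨Finset.sum_congr rfl fun _ _ => by ring,
          Finset.sum_congr rfl fun _ _ => Finset.sum_congr rfl fun _ _ => by ring⟩

end Cfg

/-! ### First order conditions -/

/-- The conjectured minimum when the third density is the smallest one. -/
noncomputable def FF (x y z : ℝ) : ℝ := 2 * Real.sqrt (x * y * (1 - z)) + 2 * z - 2

/-- Partial derivative of `FF` in its first argument. -/
noncomputable def FF1 (x y z : ℝ) : ℝ := Real.sqrt (x * y * (1 - z)) / x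
/-- Partial derivative of `FF` in its second argument. -/
noncomputable def FF2 (x y z : ℝ) : ℝ := Real.sqrt (x * y * (1 - z)) / y
/-- Partial derivative of `FF` in its third argument. -/
noncomputable def FF3 (x y z : ℝ) : ℝ := 2 - Real.sqrt (x * y * (1 - z)) / (1 - z)

theorem hasDerivAt_FF {x y z : ℝ → ℝ} {x' y' z' e : ℝ} (hx : HasDerivAt x x' e)
    (hy : HasDerivAt y y' e) (hz : HasDerivAt z z' e) (px : 0 < x e) (py : 0 < y e)
    (pz : z e < 1) :
    HasDerivAt (fun s => FF (x s) (y s) (z s))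
      (FF1 (x e) (y e) (z e) * x' + FF2 (x e) (y e) (z e) * y' + FF3 (x e) (y e) (z e) * z') e := by
  have pz' : 0 < 1 - z e := by linarith
  have hpos : 0 < x e * y e * (1 - z e) := by positivity
  have h1 : HasDerivAt (fun s => x s * y s * (1 - z s))
      ((x' * y e + x e * y') * (1 - z e) + x e * y e * (0 - z')) e :=
    (hx.mul hy).mul ((hasDerivAt_const e (1:ℝ)).sub hz)
  have h2 := (((h1.sqrt hpos.ne').const_mul 2).add (hz.const_mul 2)).sub_const 2
  unfold FF FF1 FF2 FF3
  refine h2.congr_deriv ?_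
  have hs := Real.sq_sqrt hpos.le
  have hs0 := Real.sqrt_pos.2 hpos
  set s := Real.sqrt (x e * y e * (1 - z e)) with hsdef
  have e1 : s / x e = y e * (1 - z e) / s := by
    rw [div_eq_div_iff px.ne' hs0.ne']; linarith
  have e2 : s / y e = x e * (1 - z e) / s := by
    rw [div_eq_div_iff py.ne' hs0.ne']; linarith
  have e3 : s / (1 - z e) = x e * y e / s := by
    rw [div_eq_div_iff pz'.ne' hs0.ne']; linarith
  rw [e1, e2, e3]
  field_simp
  ring

theorem eventually_lt_of_deriv_neg {f : ℝ → ℝ} {f' : ℝ} (hf : HasDerivAt f f' 0) (hneg : f' < 0) :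
    ∀ᶠ e in nhdsWithin (0:ℝ) (Set.Ioi 0), f e < f 0 := by
  have h1 := hasDerivAt_iff_tendsto_slope.1 hf
  have h2 : ∀ᶠ e in nhdsWithin (0:ℝ) {0}ᶜ, slope f 0 e < 0 := h1.eventually (gt_mem_nhds hneg)
  have h3 : ∀ᶠ e in nhdsWithin (0:ℝ) (Set.Ioi 0), slope f 0 e < 0 :=
    nhdsWithin_mono _ (fun x (hx : 0 < x) => hx.ne') h2
  filter_upwards [h3, self_mem_nhdsWithin] with e he (hpos : 0 < e)
  rw [slope_def_field, sub_zero, div_neg_iff] at he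
  rcases he with h | h <;> linarith [h.1, h.2]

/-- A convex set in `ℝ³` which misses the open negative orthant lies on the nonnegative side of a
plane with nonnegative normal vector. -/
theorem exists_multipliers (M : Set (Fin 3 → ℝ)) (hM : Convex ℝ M) (hne : M.Nonempty)
    (h : ∀ m ∈ M, ∃ i, 0 ≤ m i) :
    ∃ θ : Fin 3 → ℝ, (∀ i, 0 ≤ θ i) ∧ ∑ i, θ i = 1 ∧ ∀ m ∈ M, 0 ≤ ∑ i, θ i * m i := by
  let s : Set (Fin 3 → ℝ) := Set.univ.pi fun _ => Set.Iio 0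
  have hs1 : Convex ℝ s := convex_pi fun _ _ => convex_Iio 0
  have hs2 : IsOpen s := isOpen_set_pi Set.finite_univ fun _ _ => isOpen_Iio
  have hdis : Disjoint s M := by
    rw [Set.disjoint_left]
    intro m hm hm'
    obtain ⟨i, hi⟩ := h m hm'
    exact absurd (hm i trivial) (not_lt.2 hi)
  obtain ⟨f, u, hfs, hfM⟩ := geometric_hahn_banach_open hs1 hs2 hM hdis
  let φ : Fin 3 → ℝ := fun i => f (Pi.single i 1)
  have hf : ∀ x : Fin 3 → ℝ, f x = ∑ i, φ i * x i := by
    intro x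
    have hx : x = ∑ i, x i • (Pi.single i (1:ℝ) : Fin 3 → ℝ) := by
      ext j; simp [Finset.sum_apply, Pi.single_apply]
    conv_lhs => rw [hx]
    rw [map_sum]
    exact Finset.sum_congr rfl fun i _ => by simp [φ, mul_comm]
  have hfs' : ∀ x : Fin 3 → ℝ, (∀ i, x i < 0) → ∑ i, φ i * x i < u := fun x hx => by
    rw [← hf]; exact hfs x fun i _ => hx i
  have hu : 0 ≤ u := by
    by_contra hu
    push Not at hu
    have key : ∀ e : ℝ, 0 < e → -(e * ∑ i, φ i) < u := fun e he => by
      have := hfs' (fun _ => -e) (fun _ => by linarith)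
      rw [← Finset.sum_mul] at this; linarith
    have h1 := key 1 one_pos
    have hsum : 0 < ∑ i, φ i := by linarith
    have := key (-u / (2 * ∑ i, φ i)) (by apply div_pos <;> linarith)
    rw [div_mul_eq_mul_div, mul_comm 2, ← div_div, mul_div_cancel_right₀ _ hsum.ne'] at this
    linarith
  have hφ : ∀ i, 0 ≤ φ i := by
    intro i
    by_contra hi
    push Not at hi
    have key : ∀ N : ℝ, 0 < N → -(N * φ i) - ∑ j, φ j < u := fun N hN => by
      have := hfs' (fun j => -1 - (Pi.single i N : Fin 3 → ℝ) j) (fun j => by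
        have : 0 ≤ (Pi.single i N : Fin 3 → ℝ) j := by
          rw [Pi.single_apply]; split_ifs <;> linarith
        linarith)
      simp only [mul_sub, Finset.sum_sub_distrib, mul_neg, mul_one, Finset.sum_neg_distrib,
        Pi.single_apply, mul_ite, mul_zero, Finset.sum_ite_eq', Finset.mem_univ, if_true] at this
      linarith
    have := key ((|u + ∑ j, φ j| + 1) / (-φ i)) (by apply div_pos <;> [positivity; linarith])
    have h2 : (|u + ∑ j, φ j| + 1) / (-φ i) * φ i = -(|u + ∑ j, φ j| + 1) := by
      rw [div_neg, neg_mul, div_mul_cancel₀ _ hi.ne]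
    rw [h2] at this
    linarith [le_abs_self (u + ∑ j, φ j)]
  have hpos : 0 < ∑ i, φ i := by
    refine lt_of_le_of_ne (Finset.sum_nonneg fun i _ => hφ i) fun h0 => ?_
    have hz : ∀ i, φ i = 0 := fun i =>
      (Finset.sum_eq_zero_iff_of_nonneg fun i _ => hφ i).1 h0.symm i (Finset.mem_univ i)
    obtain ⟨m, hm⟩ := hne
    have h1 := hfM m hm
    have h2 := hfs' (fun _ => -1) (fun _ => by norm_num)
    rw [hf] at h1
    simp only [hz, zero_mul, Finset.sum_const_zero] at h1 h2
    linarith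
  refine ⟨fun i => φ i / ∑ j, φ j, fun i => div_nonneg (hφ i) hpos.le, ?_, fun m hm => ?_⟩
  · rw [← Finset.sum_div, div_self hpos.ne']
  · have h1 := hfM m hm
    rw [hf] at h1
    have : ∑ i, φ i / (∑ j, φ j) * m i = (∑ i, φ i * m i) / ∑ j, φ j := by
      rw [Finset.sum_div]; exact Finset.sum_congr rfl fun i _ => by ring
    rw [this]
    exact div_nonneg (hu.trans h1) hpos.le

/-- The three candidate lower bounds. -/
noncomputable def bnd (α β γ : ℝ) : Fin 3 → ℝ := ![FF α β γ, FF β γ α, FF γ α β]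
/-- Partial derivatives of the candidate bounds in `α`. -/
noncomputable def bndA (α β γ : ℝ) : Fin 3 → ℝ := ![FF1 α β γ, FF3 β γ α, FF2 γ α β]
/-- Partial derivatives of the candidate bounds in `β`. -/
noncomputable def bndB (α β γ : ℝ) : Fin 3 → ℝ := ![FF2 α β γ, FF1 β γ α, FF3 γ α β]
/-- Partial derivatives of the candidate bounds in `γ`. -/
noncomputable def bndC (α β γ : ℝ) : Fin 3 → ℝ := ![FF3 α β γ, FF2 β γ α, FF1 γ α β]

theorem hasDerivAt_bnd {x y z : ℝ → ℝ} {x' y' z' e : ℝ} (hx : HasDerivAt x x' e)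
    (hy : HasDerivAt y y' e) (hz : HasDerivAt z z' e) (px : 0 < x e) (py : 0 < y e)
    (pz : 0 < z e) (px' : x e < 1) (py' : y e < 1) (pz' : z e < 1) (i : Fin 3) :
    HasDerivAt (fun s => bnd (x s) (y s) (z s) i)
      (bndA (x e) (y e) (z e) i * x' + bndB (x e) (y e) (z e) i * y' +
        bndC (x e) (y e) (z e) i * z') e := by
  fin_cases i
  · exact hasDerivAt_FF hx hy hz px py pz'
  · refine (hasDerivAt_FF hy hz hx py pz px').congr_deriv ?_
    simp [bndA, bndB, bndC]; ring
  · refine (hasDerivAt_FF hz hx hy pz px py').congr_deriv ?_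
    simp [bndA, bndB, bndC]; ring

/-- Excess of `t` over the smallest candidate bound. -/
noncomputable def excess (α β γ t : ℝ) : ℝ :=
  max (t - FF α β γ) (max (t - FF β γ α) (t - FF γ α β))

theorem excess_lt_iff {α β γ t u : ℝ} : excess α β γ t < u ↔ ∀ i, t - bnd α β γ i < u := by
  simp [excess, Fin.forall_fin_succ, bnd]

theorem le_excess (α β γ t : ℝ) (i : Fin 3) : t - bnd α β γ i ≤ excess α β γ t := by
  fin_cases i <;> simp [excess, bnd]

theorem continuous_excess :
    Continuous fun x : ℝ × ℝ × ℝ × ℝ => excess x.1 x.2.1 x.2.2.1 x.2.2.2 := by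
  unfold excess FF
  fun_prop

namespace Cfg
variable {A B C : Type} [Fintype A] [Fintype B] [Fintype C]

/-- Simultaneous perturbation of all three classes. -/
theorem perturb (G : Cfg A B C) {vC vA vB : ℝ × ℝ × ℝ} (hC : vC ∈ G.Q) (hA : vA ∈ G.rot.Q)
    (hB : vB ∈ G.rot.rot.Q) {ε : ℝ} (h0 : 0 ≤ ε) (h1 : ε ≤ 1) :
    ∃ (A' B' C' : Type) (_ : Fintype A') (_ : Fintype B') (_ : Fintype C') (H : Cfg A' B' C'),
      H.al = (1 - ε) * ((1 - ε) * G.al + ε * vC.1) + ε * ((1 - ε) * vB.2.1) ∧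
      H.be = (1 - ε) * ((1 - ε) * G.be + ε * vC.2.1) + ε * ((1 - ε) * vA.1) ∧
      H.ga = (1 - ε) * ((1 - ε) * G.ga + ε * vA.2.1) + ε * ((1 - ε) * vB.1) ∧
      H.t = (1 - ε) * ((1 - ε) * ((1 - ε) * G.t + ε * vC.2.2) + ε * ((1 - ε) * vA.2.2)) +
        ε * ((1 - ε) * ((1 - ε) * vB.2.2)) := by
  obtain ⟨C', _, H1, a1, b1, c1, t1, q1, q1'⟩ := G.addC hC h0 h1
  obtain ⟨A', _, H2, a2, b2, c2, t2, q2, -⟩ := H1.rot.addC (q1 vA hA) h0 h1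
  obtain ⟨B', _, H3, a3, b3, c3, t3, -, -⟩ := H2.rot.addC (q2 _ (q1' vB hB)) h0 h1
  refine ⟨A', B', C', _, _, _, H3.rot, ?_, ?_, ?_, ?_⟩
  · rw [rot_al, b3, rot_be, c2, rot_ga, a1]
  · rw [rot_be, c3, rot_ga, a2, rot_al, b1]
  · rw [rot_ga, a3, rot_al, b2, rot_be, c1]
  · rw [rot_t, t3, rot_t, t2, rot_t, t1]

/-- The first order condition at the class `C` with multipliers `X`, `Y`. -/
def Probe (G : Cfg A B C) (X Y : ℝ) : Prop :=
  ∀ (S : A → ℝ) (T : B → ℝ), (∀ i, S i ∈ Set.Icc (0:ℝ) 1) → (∀ j, T j ∈ Set.Icc (0:ℝ) 1) →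
    G.t + X * (∑ j, G.b j * T j - G.al) + Y * (∑ i, G.a i * S i - G.be) ≤ G.val S T

theorem hasDerivAt_aux (x u v : ℝ) :
    HasDerivAt (fun ε : ℝ => (1 - ε) * ((1 - ε) * x + ε * u) + ε * ((1 - ε) * v))
      (-2 * x + u + v) 0 := by
  have h := hasDerivAt_id (0:ℝ)
  have h' : HasDerivAt (fun ε : ℝ => 1 - ε) (-1) 0 :=
    h.const_sub 1
  refine ((h'.mul ((h'.mul_const x).add (h.mul_const u))).add (h.mul (h'.mul_const v))).congr_deriv ?_
  simp; ring

theorem hasDerivAt_aux' (x u v w : ℝ) :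
    HasDerivAt (fun ε : ℝ => (1 - ε) * ((1 - ε) * ((1 - ε) * x + ε * u) + ε * ((1 - ε) * v)) +
        ε * ((1 - ε) * ((1 - ε) * w))) (-3 * x + u + v + w) 0 := by
  have h := hasDerivAt_id (0:ℝ)
  have h' : HasDerivAt (fun ε : ℝ => 1 - ε) (-1) 0 :=
    h.const_sub 1
  refine ((h'.mul (hasDerivAt_aux x u v)).add (h.mul (h'.mul (h'.mul_const w)))).congr_deriv ?_
  simp; ring

/-- At a minimizer of the excess the first order conditions hold at all three classes, the
multipliers being the components of a convex combination of the gradients of those candidate bounds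
which attain the minimum. -/
theorem kkt (G : Cfg A B C) (pa : 0 < G.al) (pb : 0 < G.be) (pc : 0 < G.ga) (pa' : G.al < 1)
    (pb' : G.be < 1) (pc' : G.ga < 1)
    (hmin : ∀ (A' B' C' : Type) [Fintype A'] [Fintype B'] [Fintype C'] (H : Cfg A' B' C'),
        excess G.al G.be G.ga G.t ≤ excess H.al H.be H.ga H.t) :
    ∃ θ : Fin 3 → ℝ, (∀ i, 0 ≤ θ i) ∧ ∑ i, θ i = 1 ∧
      (∀ i, θ i ≠ 0 → ∀ j, bnd G.al G.be G.ga i ≤ bnd G.al G.be G.ga j) ∧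
      G.Probe (∑ i, θ i * bndA G.al G.be G.ga i) (∑ i, θ i * bndB G.al G.be G.ga i) ∧
      G.rot.Probe (∑ i, θ i * bndB G.al G.be G.ga i) (∑ i, θ i * bndC G.al G.be G.ga i) ∧
      G.rot.rot.Probe (∑ i, θ i * bndC G.al G.be G.ga i) (∑ i, θ i * bndA G.al G.be G.ga i) := by
  classical
  set gA := bndA G.al G.be G.ga with hgA
  set gB := bndB G.al G.be G.ga with hgB
  set gC := bndC G.al G.be G.ga with hgC
  set Φ := excess G.al G.be G.ga G.t with hΦ
  let act : Fin 3 → Prop := fun i => G.t - bnd G.al G.be G.ga i = Φ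
  let slope3 : ℝ × ℝ × ℝ → ℝ × ℝ × ℝ → ℝ × ℝ × ℝ → Fin 3 → ℝ := fun vC vA vB i =>
    if act i then (-3 * G.t + vC.2.2 + vA.2.2 + vB.2.2) - (gA i * (-2 * G.al + vC.1 + vB.2.1) +
      gB i * (-2 * G.be + vC.2.1 + vA.1) + gC i * (-2 * G.ga + vA.2.1 + vB.1)) else -1
  let M : Set (Fin 3 → ℝ) := {m | ∃ vC ∈ G.Q, ∃ vA ∈ G.rot.Q, ∃ vB ∈ G.rot.rot.Q,
    m = slope3 vC vA vB}
  have sC := G.self_mem_Q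
  have sA := G.rot.self_mem_Q
  have sB := G.rot.rot.self_mem_Q
  have hconv : Convex ℝ M := by
    rintro _ ⟨vC, hC, vA, hA, vB, hB, rfl⟩ _ ⟨wC, hC', wA, hA', wB, hB', rfl⟩ x y hx hy hxy
    refine ⟨x • vC + y • wC, convex_convexHull ℝ _ hC hC' hx hy hxy, x • vA + y • wA,
      convex_convexHull ℝ _ hA hA' hx hy hxy, x • vB + y • wB,
      convex_convexHull ℝ _ hB hB' hx hy hxy, ?_⟩
    obtain rfl : y = 1 - x := by linarith
    ext i
    simp only [slope3, Pi.add_apply, Pi.smul_apply, smul_eq_mul, Prod.fst_add, Prod.snd_add,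
      Prod.smul_fst, Prod.smul_snd]
    split_ifs <;> ring
  have hmiss : ∀ m ∈ M, ∃ i, 0 ≤ m i := by
    rintro _ ⟨vC, hC, vA, hA, vB, hB, rfl⟩
    by_contra! hcon
    let x : ℝ → ℝ := fun ε => (1 - ε) * ((1 - ε) * G.al + ε * vC.1) + ε * ((1 - ε) * vB.2.1)
    let y : ℝ → ℝ := fun ε => (1 - ε) * ((1 - ε) * G.be + ε * vC.2.1) + ε * ((1 - ε) * vA.1)
    let z : ℝ → ℝ := fun ε => (1 - ε) * ((1 - ε) * G.ga + ε * vA.2.1) + ε * ((1 - ε) * vB.1)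
    let τ : ℝ → ℝ := fun ε => (1 - ε) * ((1 - ε) * ((1 - ε) * G.t + ε * vC.2.2) +
      ε * ((1 - ε) * vA.2.2)) + ε * ((1 - ε) * ((1 - ε) * vB.2.2))
    have x0 : x 0 = G.al := by simp [x]
    have y0 : y 0 = G.be := by simp [y]
    have z0 : z 0 = G.ga := by simp [z]
    have τ0 : τ 0 = G.t := by simp [τ]
    have hev : ∀ i, ∀ᶠ ε in nhdsWithin (0:ℝ) (Set.Ioi 0), τ ε - bnd (x ε) (y ε) (z ε) i < Φ := by
      intro i
      have hd : HasDerivAt (fun ε => τ ε - bnd (x ε) (y ε) (z ε) i) _ 0 :=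
        (hasDerivAt_aux' G.t vC.2.2 vA.2.2 vB.2.2).sub
          (hasDerivAt_bnd (hasDerivAt_aux G.al vC.1 vB.2.1) (hasDerivAt_aux G.be vC.2.1 vA.1)
            (hasDerivAt_aux G.ga vA.2.1 vB.1) (by simpa using pa) (by simpa using pb)
            (by simpa using pc) (by simpa using pa') (by simpa using pb') (by simpa using pc') i)
      by_cases hi : act i
      · have h1 := hcon i
        simp only [slope3, hi, if_true] at h1
        have h2 := eventually_lt_of_deriv_neg hd (by simpa using h1)
        simp only [x0, y0, z0, τ0] at h2
        have h3 : G.t - bnd G.al G.be G.ga i = Φ := hi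
        rwa [h3] at h2
      · have h1 : τ 0 - bnd (x 0) (y 0) (z 0) i < Φ := by
          rw [x0, y0, z0, τ0]
          exact lt_of_le_of_ne (le_excess _ _ _ _ i) hi
        exact (hd.continuousAt.eventually (gt_mem_nhds h1)).filter_mono nhdsWithin_le_nhds
    have h1 : ∀ᶠ ε in nhdsWithin (0:ℝ) (Set.Ioi 0), ε < 1 :=
      Filter.Eventually.filter_mono nhdsWithin_le_nhds (gt_mem_nhds one_pos)
    obtain ⟨ε, hε, hε1, hε0⟩ := ((Filter.eventually_all.2 hev).and
      (h1.and self_mem_nhdsWithin)).exists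
    obtain ⟨A', B', C', _, _, _, H, e1, e2, e3, e4⟩ :=
      G.perturb hC hA hB (le_of_lt hε0) hε1.le
    have h2 := hmin A' B' C' H
    rw [e1, e2, e3, e4] at h2
    exact absurd (excess_lt_iff.2 hε) (not_lt.2 h2)
  obtain ⟨θ, hθ, hsum, hpos⟩ := exists_multipliers M hconv ⟨_, _, sC, _, sA, _, sB, rfl⟩ hmiss
  have hinact : ∀ i, ¬ act i → θ i = 0 := by
    have h1 := hpos _ ⟨_, sC, _, sA, _, sB, rfl⟩
    have h2 : ∀ i, θ i * slope3 (G.al, G.be, G.t) (G.rot.al, G.rot.be, G.rot.t)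
        (G.rot.rot.al, G.rot.rot.be, G.rot.rot.t) i = if act i then 0 else -θ i := by
      intro i
      simp only [slope3, rot_al, rot_be, rot_t, rot_ga]
      split_ifs <;> ring
    rw [Finset.sum_congr rfl fun i _ => h2 i] at h1
    have h3 : ∀ i ∈ (univ : Finset (Fin 3)), 0 ≤ if act i then (0:ℝ) else θ i := by
      intro i _; split_ifs; exacts [le_rfl, hθ i]
    have h4 : ∑ i, (if act i then (0:ℝ) else θ i) = 0 := by
      refine le_antisymm ?_ (Finset.sum_nonneg h3)
      have : ∑ i, (if act i then (0:ℝ) else -θ i) = - ∑ i, (if act i then (0:ℝ) else θ i) := by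
        rw [← Finset.sum_neg_distrib]
        exact Finset.sum_congr rfl fun i _ => by split_ifs <;> simp
      linarith
    intro i hi
    have := (Finset.sum_eq_zero_iff_of_nonneg h3).1 h4 i (mem_univ i)
    simpa [hi] using this
  have hkey : ∀ vC ∈ G.Q, ∀ vA ∈ G.rot.Q, ∀ vB ∈ G.rot.rot.Q,
      0 ≤ (-3 * G.t + vC.2.2 + vA.2.2 + vB.2.2) -
        ((∑ i, θ i * gA i) * (-2 * G.al + vC.1 + vB.2.1) +
        (∑ i, θ i * gB i) * (-2 * G.be + vC.2.1 + vA.1) +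
        (∑ i, θ i * gC i) * (-2 * G.ga + vA.2.1 + vB.1)) := by
    intro vC hC vA hA vB hB
    have h1 := hpos _ ⟨vC, hC, vA, hA, vB, hB, rfl⟩
    have h2 : ∀ i, θ i * slope3 vC vA vB i = θ i * (-3 * G.t + vC.2.2 + vA.2.2 + vB.2.2) -
      (θ i * gA i * (-2 * G.al + vC.1 + vB.2.1) + θ i * gB i * (-2 * G.be + vC.2.1 + vA.1) +
        θ i * gC i * (-2 * G.ga + vA.2.1 + vB.1)) := by
      intro i
      by_cases hi : act i
      · simp only [slope3, hi, if_true]; ring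
      · rw [hinact i hi]; ring
    rw [Finset.sum_congr rfl fun i _ => h2 i] at h1
    simp only [Finset.sum_sub_distrib, Finset.sum_add_distrib, ← Finset.sum_mul, hsum, one_mul] at h1
    exact h1
  simp only [rot_al, rot_be, rot_ga, rot_t] at sA sB
  refine ⟨θ, hθ, hsum, ?_, ?_, ?_, ?_⟩
  · intro i hi j
    have h1 : act i := by by_contra h; exact hi (hinact i h)
    have h2 := le_excess G.al G.be G.ga G.t j
    have h3 : G.t - bnd G.al G.be G.ga i = Φ := h1
    linarith
  · intro S T hS hT
    have := hkey _ (subset_convexHull ℝ _ ⟨S, T, hS, hT, rfl⟩) _ sA _ sB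
    simp only at this
    nlinarith [this]
  · intro S T hS hT
    have := hkey _ sC _ (subset_convexHull ℝ _ ⟨S, T, hS, hT, rfl⟩) _ sB
    simp only [rot_al, rot_be, rot_t] at this ⊢
    nlinarith [this]
  · intro S T hS hT
    have := hkey _ sC _ sA _ (subset_convexHull ℝ _ ⟨S, T, hS, hT, rfl⟩)
    simp only [rot_al, rot_be, rot_ga, rot_t] at this ⊢
    nlinarith [this]

end Cfg

/-! ### Conditional lower bound -/

namespace Cfg
variable {A B C : Type} [Fintype A] [Fintype B] [Fintype C]

/-- All weights are positive and the first order conditions hold at each class. -/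
structure KKT (G : Cfg A B C) (X Y Z : ℝ) : Prop where
  pa : ∀ i, 0 < G.a i
  pb : ∀ j, 0 < G.b j
  pc : ∀ k, 0 < G.c k
  prC : G.Probe X Y
  prA : G.rot.Probe Y Z
  prB : G.rot.rot.Probe Z X

theorem KKT.rot {G : Cfg A B C} {X Y Z : ℝ} (h : G.KKT X Y Z) : G.rot.KKT Y Z X :=
  ⟨h.pb, h.pc, h.pa, h.prA, h.prB, h.prC⟩

theorem dA_nonneg (G : Cfg A B C) (k : C) : 0 ≤ G.dA k :=
  Finset.sum_nonneg fun i _ => mul_nonneg (G.ha i) (G.hq k i).1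

theorem dA_le (G : Cfg A B C) (k : C) : G.dA k ≤ 1 := by
  rw [← G.sa]
  exact Finset.sum_le_sum fun i _ => mul_le_of_le_one_right (G.ha i) (G.hq k i).2

theorem dB_nonneg (G : Cfg A B C) (k : C) : 0 ≤ G.dB k :=
  Finset.sum_nonneg fun j _ => mul_nonneg (G.hb j) (G.hp j k).1

theorem dB_le (G : Cfg A B C) (k : C) : G.dB k ≤ 1 := by
  rw [← G.sb]
  exact Finset.sum_le_sum fun j _ => mul_le_of_le_one_right (G.hb j) (G.hp j k).2

theorem dA_eq_one {G : Cfg A B C} {k : C} (h : ∀ i, G.q k i = 1) : G.dA k = 1 := by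
  simp [dA, h, G.sa]

theorem dB_eq_one {G : Cfg A B C} {k : C} (h : ∀ j, G.p j k = 1) : G.dB k = 1 := by
  simp [dB, h, G.sb]

theorem val_sub_left (G : Cfg A B C) (S S' : A → ℝ) (T : B → ℝ) :
    G.val S T - G.val S' T = G.val (fun i => S i - S' i) T := by
  unfold val
  simp only [← Finset.sum_sub_distrib]
  exact Finset.sum_congr rfl fun i _ => Finset.sum_congr rfl fun j _ => by ring

theorem val_sub_right (G : Cfg A B C) (S : A → ℝ) (T T' : B → ℝ) :
    G.val S T - G.val S T' = G.val S (fun j => T j - T' j) := by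
  unfold val
  simp only [← Finset.sum_sub_distrib]
  exact Finset.sum_congr rfl fun i _ => Finset.sum_congr rfl fun j _ => by ring

theorem val_mono (G : Cfg A B C) {S S' : A → ℝ} {T T' : B → ℝ} (hS : ∀ i, 0 ≤ S i)
    (hT : ∀ j, 0 ≤ T j) (hS' : ∀ i, S i ≤ S' i) (hT' : ∀ j, T j ≤ T' j) :
    G.val S T ≤ G.val S' T' := by
  refine Finset.sum_le_sum fun i _ => Finset.sum_le_sum fun j _ => ?_
  refine mul_le_mul_of_nonneg_left ?_ (mul_nonneg (G.ha i) (G.hb j))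
  exact mul_le_mul_of_nonneg_right
    (mul_le_mul (hS' i) (hT' j) (hT j) ((hS i).trans (hS' i))) (G.hr i j).1

theorem val_le (G : Cfg A B C) {S : A → ℝ} {T : B → ℝ} (hS : ∀ i, 0 ≤ S i) (hT : ∀ j, 0 ≤ T j) :
    G.val S T ≤ (∑ i, G.a i * S i) * ∑ j, G.b j * T j := by
  rw [Finset.sum_mul_sum]
  refine Finset.sum_le_sum fun i _ => Finset.sum_le_sum fun j _ => ?_
  have h : 0 ≤ G.a i * S i * (G.b j * T j) :=
    mul_nonneg (mul_nonneg (G.ha i) (hS i)) (mul_nonneg (G.hb j) (hT j))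
  calc _ = G.a i * S i * (G.b j * T j) * G.r i j := by ring
    _ ≤ _ := mul_le_of_le_one_right h (G.hr i j).2

theorem val_ge_mul (G : Cfg A B C) {S : A → ℝ} {T : B → ℝ} (hS : ∀ i, S i ∈ Set.Icc (0:ℝ) 1)
    (hT : ∀ j, T j ∈ Set.Icc (0:ℝ) 1) :
    (∑ i, G.a i * S i) * (∑ j, G.b j * T j) - (1 - G.ga) ≤ G.val S T := by
  have h1 : (1:ℝ) = ∑ i, ∑ j, G.a i * G.b j := by
    rw [← Finset.sum_mul_sum, G.sa, G.sb, one_mul]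
  rw [Finset.sum_mul_sum]
  nth_rewrite 1 [h1]
  unfold ga val
  simp only [← Finset.sum_sub_distrib]
  refine Finset.sum_le_sum fun i _ => Finset.sum_le_sum fun j _ => ?_
  have hab := mul_nonneg (G.ha i) (G.hb j)
  have h2 : S i * T j ≤ 1 := mul_le_one₀ (hS i).2 (hT j).1 (hT j).2
  have := mul_nonneg hab (mul_nonneg (sub_nonneg.2 h2) (sub_nonneg.2 (G.hr i j).2))
  nlinarith [this]

section
variable {G : Cfg A B C} {X Y Z : ℝ}

/-- The first order condition holds with equality at existing vertices. -/
theorem KKT.val_eq (h : G.KKT X Y Z) (k : C) :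
    G.val (G.q k) (fun j => G.p j k) = G.t + X * (G.dB k - G.al) + Y * (G.dA k - G.be) := by
  have hge : ∀ k, 0 ≤ G.val (G.q k) (fun j => G.p j k) -
      (G.t + X * (G.dB k - G.al) + Y * (G.dA k - G.be)) := fun k =>
    sub_nonneg.2 (h.prC (G.q k) (fun j => G.p j k) (G.hq k) (fun j => G.hp j k))
  have hsum : ∑ k, G.c k * (G.val (G.q k) (fun j => G.p j k) -
      (G.t + X * (G.dB k - G.al) + Y * (G.dA k - G.be))) = 0 := by
    have e : ∀ k, G.c k * (G.val (G.q k) (fun j => G.p j k) -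
      (G.t + X * (G.dB k - G.al) + Y * (G.dA k - G.be))) =
      G.c k * G.val (G.q k) (fun j => G.p j k) - G.c k * (G.t - X * G.al - Y * G.be)
        - X * (G.c k * G.dB k) - Y * (G.c k * G.dA k) := fun k => by ring
    simp only [e, Finset.sum_sub_distrib, ← Finset.mul_sum, ← Finset.sum_mul]
    rw [← al_eq, ← be_eq, ← t_eq, G.sc]; ring
  have := (Finset.sum_eq_zero_iff_of_nonneg fun k _ => mul_nonneg (G.hc k) (hge k)).1 hsum k
    (mem_univ k)
  rcases mul_eq_zero.1 this with h0 | h0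
  · exact absurd h0 (h.pc k).ne'
  · linarith

/-- A vertex of `C` of density less than `Y` into `B` is joined completely to `A`: the first order
condition says that each unit of density added towards `A` costs at least `Y` in triangles, whereas
the true cost is at most the density into `B`. -/
theorem KKT.full_A (h : G.KKT X Y Z) {k : C} (hk : G.dB k < Y) (i : A) : G.q k i = 1 := by
  have h1 := h.prC (fun _ => 1) (fun j => G.p j k) (fun _ => ⟨zero_le_one, le_rfl⟩)
    (fun j => G.hp j k)
  have h2 := h.val_eq k
  have h3 := G.val_sub_left (fun _ => 1) (G.q k) (fun j => G.p j k)
  have h4 := G.val_le (S := fun i => 1 - G.q k i) (T := fun j => G.p j k)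
    (fun i => sub_nonneg.2 (G.hq k i).2) (fun j => (G.hp j k).1)
  have h5 : ∑ i, G.a i * (1 - G.q k i) = 1 - G.dA k := by
    simp [mul_sub, G.sa, dA]
  have h6 : ∑ j, G.b j * G.p j k = G.dB k := rfl
  rw [h5, h6] at h4
  rw [h6] at h1
  simp only [mul_one, G.sa] at h1
  have h7 : (1 - G.dA k) * (Y - G.dB k) ≤ 0 := by nlinarith
  have h8 : G.dA k = 1 := by nlinarith [G.dA_le k]
  have h9 := (Finset.sum_eq_zero_iff_of_nonneg fun i _ =>
    mul_nonneg (G.ha i) (sub_nonneg.2 (G.hq k i).2)).1 (by rw [h5, h8, sub_self]) i (mem_univ i)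
  rcases mul_eq_zero.1 h9 with h0 | h0
  · exact absurd h0 (h.pa i).ne'
  · linarith

/-- A vertex of `C` of density less than `X` into `A` is joined completely to `B`. -/
theorem KKT.full_B (h : G.KKT X Y Z) {k : C} (hk : G.dA k < X) (j : B) : G.p j k = 1 := by
  have h1 := h.prC (G.q k) (fun _ => 1) (G.hq k) (fun _ => ⟨zero_le_one, le_rfl⟩)
  have h2 := h.val_eq k
  have h3 := G.val_sub_right (G.q k) (fun _ => 1) (fun j => G.p j k)
  have h4 := G.val_le (S := G.q k) (T := fun j => 1 - G.p j k)
    (fun i => (G.hq k i).1) (fun j => sub_nonneg.2 (G.hp j k).2)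
  have h5 : ∑ j, G.b j * (1 - G.p j k) = 1 - G.dB k := by
    simp [mul_sub, G.sb, dB]
  have h6 : ∑ i, G.a i * G.q k i = G.dA k := rfl
  rw [h5, h6] at h4
  rw [h6] at h1
  simp only [mul_one, G.sb] at h1
  have h7 : (1 - G.dB k) * (X - G.dA k) ≤ 0 := by nlinarith
  have h8 : G.dB k = 1 := by nlinarith [G.dB_le k]
  have h9 := (Finset.sum_eq_zero_iff_of_nonneg fun j _ =>
    mul_nonneg (G.hb j) (sub_nonneg.2 (G.hp j k).2)).1 (by rw [h5, h8, sub_self]) j (mem_univ j)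
  rcases mul_eq_zero.1 h9 with h0 | h0
  · exact absurd h0 (h.pb j).ne'
  · linarith

/-- Every vertex of `C` has small density into `A` or into `B`. -/
def NoCirc (G : Cfg A B C) (X Y : ℝ) : Prop := ∀ k, G.dA k < X ∨ G.dB k < Y

/-- A vertex of `C` with densities `s` into `A` and `u` into `B` lies in at least
`s * u - (1 - G.ga)` triangles; by the first order condition the hypothesis then says that
`(s - X) * (u - Y)` is negative. -/
theorem KKT.noCirc (h : G.KKT X Y Z) (hκ : G.t - X * G.al - Y * G.be + (1 - G.ga) + X * Y < 0) :
    G.NoCirc X Y := by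
  intro k
  by_contra! hcon
  obtain ⟨h1, h2⟩ := hcon
  have h3 := h.val_eq k
  have h4 := G.val_ge_mul (G.hq k) (fun j => G.hp j k)
  have h5 : ∑ i, G.a i * G.q k i = G.dA k := rfl
  have h6 : ∑ j, G.b j * G.p j k = G.dB k := rfl
  rw [h5, h6] at h4
  nlinarith [mul_nonneg (sub_nonneg.2 h1) (sub_nonneg.2 h2)]

/-- Total weight of the vertices of `C` of density less than `X` into `A`. -/
noncomputable def low (G : Cfg A B C) (X : ℝ) : ℝ :=
  open Classical in ∑ k, G.c k * if G.dA k < X then 1 else 0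

theorem low_nonneg (G : Cfg A B C) (X : ℝ) : 0 ≤ G.low X := by
  classical
  unfold low
  refine Finset.sum_nonneg fun k _ => mul_nonneg (G.hc k) ?_
  split_ifs <;> norm_num

/-- The vertices counted by `low` are joined completely to `B`. -/
theorem KKT.low_le (h : G.KKT X Y Z) (j : B) : G.low X ≤ G.rot.rot.dA j := by
  classical
  unfold low
  refine Finset.sum_le_sum fun k _ => mul_le_mul_of_nonneg_left ?_ (G.hc k)
  split_ifs with hk
  · exact (h.full_B hk j).ge
  · exact (G.hp j k).1

/-- An existing vertex `k` of `C` of density less than `X` into `A` is joined completely to `B`, so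
its triangles are counted by the densities of its neighbours in `A` into `B`. Only neighbours of
density less than `Y` save anything, and all densities from `A` into `B` are at least `low Z`. -/
theorem KKT.triple (h : G.KKT X Y Z) (hex : ∃ k, G.dA k < X) :
    Y * G.be - X * (1 - G.al) - G.t ≤ G.rot.low Y * (Y - G.rot.rot.low Z) := by
  classical
  obtain ⟨k, hk⟩ := hex
  have hp : ∀ j, G.p j k = 1 := h.full_B hk
  have h1 := h.val_eq k
  rw [dB_eq_one hp] at h1
  have h2 : G.val (G.q k) (fun j => G.p j k) = ∑ i, G.a i * G.q k i * G.rot.dA i := by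
    unfold val
    refine Finset.sum_congr rfl fun i _ => ?_
    have hd : G.rot.dA i = ∑ j, G.b j * G.r i j := rfl
    simp only [hd, hp, mul_one, Finset.mul_sum]
    exact Finset.sum_congr rfl fun j _ => by ring
  have h3 : Y * G.be - X * (1 - G.al) - G.t = ∑ i, G.a i * (G.q k i * (Y - G.rot.dA i)) := by
    have : ∀ i, G.a i * (G.q k i * (Y - G.rot.dA i)) =
      G.a i * G.q k i * Y - G.a i * G.q k i * G.rot.dA i := fun i => by ring
    simp only [this, Finset.sum_sub_distrib, ← h2, ← Finset.sum_mul]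
    rw [h1]; unfold dA; ring
  rw [h3]
  unfold low
  rw [Finset.sum_mul]
  refine Finset.sum_le_sum fun i _ => ?_
  have : G.rot.c i = G.a i := rfl
  rw [this, mul_assoc]
  refine mul_le_mul_of_nonneg_left ?_ (G.ha i)
  have h4 := h.rot.rot.low_le i
  have h4' : G.rot.rot.low Z ≤ G.rot.dA i := h4
  have hq := G.hq k i
  unfold low at h4'
  split_ifs with hi
  · nlinarith [hq.1, hq.2]
  · nlinarith [hq.1, hq.2]

/-- If no vertex of `A` is large in both directions, the same holds in `C`. -/
theorem KKT.noCirc_of_rot (h : G.KKT X Y Z) (hA : G.rot.NoCirc Y Z) (hex : ∃ k, G.dA k < X)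
    (hY : Y < 1) : G.NoCirc X Y := by
  classical
  intro k
  by_contra! hcon
  obtain ⟨h1, h2⟩ := hcon
  obtain ⟨k0, hk0⟩ := hex
  -- `χ` is the indicator function of the vertices of `A` with large density into `C`
  let χ : A → ℝ := fun i => if G.rot.dB i < Z then 0 else 1
  have hχ : ∀ i, χ i ∈ Set.Icc (0:ℝ) 1 := fun i => by
    simp only [χ]; split_ifs <;> simp
  have hχq : ∀ i k, χ i ≤ G.q k i := fun i k => by
    simp only [χ]
    split_ifs with hi
    · exact (G.hq k i).1
    · have := (hA i).resolve_right hi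
      exact (h.rot.full_B this k).ge
  set P := ∑ i, G.a i * χ i with hP
  have hPk : P < X := lt_of_le_of_lt
    (Finset.sum_le_sum fun i _ => mul_le_mul_of_nonneg_left (hχq i k0) (G.ha i)) hk0
  have h3 := h.prC χ (fun _ => 1) hχ (fun _ => ⟨zero_le_one, le_rfl⟩)
  have h4 := h.val_eq k
  have h5 := G.val_sub_right χ (fun _ => 1) (fun j => G.p j k)
  have h6 := G.val_le (S := χ) (T := fun j => 1 - G.p j k)
    (fun i => (hχ i).1) (fun j => sub_nonneg.2 (G.hp j k).2)
  have h7 := G.val_sub_left (G.q k) χ (fun j => G.p j k)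
  have h8 : G.val (fun i => G.q k i - χ i) (fun j => G.p j k) = (G.dA k - P) * G.dB k := by
    have : G.dA k - P = ∑ i, G.a i * (G.q k i - χ i) := by
      simp only [mul_sub, Finset.sum_sub_distrib, dA, hP]
    rw [this, dB, Finset.sum_mul_sum]
    refine Finset.sum_congr rfl fun i _ => Finset.sum_congr rfl fun j _ => ?_
    by_cases hi : G.rot.dB i < Z
    · have : G.r i j = 1 := h.rot.full_A hi j
      rw [this]; ring
    · have h9 : χ i = 1 := by simp [χ, hi]
      have h10 : G.q k i = 1 := le_antisymm (G.hq k i).2 (h9 ▸ hχq i k)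
      simp only [h9, h10]; ring
  have h9 : ∑ j, G.b j * (1 - G.p j k) = 1 - G.dB k := by
    simp [mul_sub, G.sb, dB]
  rw [h9, ← hP] at h6
  simp only [mul_one, G.sb, ← hP] at h3
  have h10 : (X - P) * (1 - G.dB k) + (G.dA k - P) * (G.dB k - Y) ≤ 0 := by nlinarith
  have h11 : 0 ≤ (G.dA k - P) * (G.dB k - Y) := mul_nonneg (by linarith) (by linarith)
  have h12 : G.dB k = 1 := by nlinarith [G.dB_le k]
  rw [h12] at h10
  nlinarith

end

/-- The two-block structure forces the bound associated with the density between `A` and `C`. -/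
theorem le_t_of_blocks (G : Cfg A B C) (A1 : A → Prop) (C1 : C → Prop)
    (hr : ∀ i, A1 i → ∀ j, G.r i j = 1) (hq : ∀ i, ¬ A1 i → ∀ k, G.q k i = 1)
    (hq' : ∀ k, C1 k → ∀ i, G.q k i = 1) (hp : ∀ k, ¬ C1 k → ∀ j, G.p j k = 1) :
    FF G.ga G.al G.be ≤ G.t := by
  classical
  let χ : A → ℝ := fun i => if A1 i then 1 else 0
  let ψ : C → ℝ := fun k => if C1 k then 1 else 0
  set U := ∑ i, G.a i * χ i with hU
  set v := ∑ k, G.c k * ψ k with hv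
  have hχ : ∀ i, χ i ∈ Set.Icc (0:ℝ) 1 := fun i => by
    simp only [χ]; split_ifs <;> simp
  have hψ : ∀ k, ψ k ∈ Set.Icc (0:ℝ) 1 := fun i => by
    simp only [ψ]; split_ifs <;> simp
  have hU0 : 0 ≤ U := Finset.sum_nonneg fun i _ => mul_nonneg (G.ha i) (hχ i).1
  have hv1 : v ≤ 1 := by
    rw [← G.sc]
    exact Finset.sum_le_sum fun i _ => mul_le_of_le_one_right (G.hc i) (hψ i).2
  have hga : U ≤ G.ga := by
    unfold ga
    refine Finset.sum_le_sum fun i _ => ?_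
    by_cases hi : A1 i
    · simp only [χ, hi, if_true, hr i hi, mul_one, ← Finset.mul_sum, G.sb]; exact le_rfl
    · simp only [χ, hi, if_false, mul_zero]
      exact Finset.sum_nonneg fun j _ => mul_nonneg (mul_nonneg (G.ha i) (G.hb j)) (G.hr i j).1
  have e1 : 1 - v = ∑ k, G.c k * (1 - ψ k) := by simp [mul_sub, G.sc, hv]
  have hal : 1 - v ≤ G.al := by
    rw [al_eq, e1]
    refine Finset.sum_le_sum fun k _ => mul_le_mul_of_nonneg_left ?_ (G.hc k)
    by_cases hk : C1 k
    · simpa [ψ, hk] using G.dB_nonneg k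
    · simp [ψ, hk, dB_eq_one (hp k hk)]
  have hdA : ∀ k, 1 - U ≤ G.dA k := fun k => by
    have : 1 - U = ∑ i, G.a i * (1 - χ i) := by simp [mul_sub, G.sa, hU]
    rw [this]
    refine Finset.sum_le_sum fun i _ => mul_le_mul_of_nonneg_left ?_ (G.ha i)
    by_cases hi : A1 i
    · simpa [χ, hi] using (G.hq k i).1
    · simp [χ, hi, hq i hi k]
  have hbe : 1 - U * (1 - v) ≤ G.be := by
    have : 1 - U * (1 - v) = ∑ k, G.c k * (1 - U * (1 - ψ k)) := by
      have : ∀ k, G.c k * (1 - U * (1 - ψ k)) = G.c k - U * (G.c k * (1 - ψ k)) := fun k => by ring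
      simp only [this, Finset.sum_sub_distrib, ← Finset.mul_sum, G.sc, ← e1]
    rw [this, be_eq]
    refine Finset.sum_le_sum fun k _ => mul_le_mul_of_nonneg_left ?_ (G.hc k)
    by_cases hk : C1 k
    · simp [ψ, hk, dA_eq_one (hq' k hk)]
    · simpa [ψ, hk] using hdA k
  have ht : G.be - 1 + U * (1 - v) + U * (G.al - 1 + v) + (1 - v) * (G.ga - U) ≤ G.t := by
    have : G.be - 1 + U * (1 - v) + U * (G.al - 1 + v) + (1 - v) * (G.ga - U) =
        ∑ k, G.c k * (G.dA k - 1 + U * G.dB k + (1 - ψ k) * (G.ga - U)) := by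
      have : ∀ k, G.c k * (G.dA k - 1 + U * G.dB k + (1 - ψ k) * (G.ga - U)) =
        G.c k * G.dA k - G.c k + U * (G.c k * G.dB k) + (G.c k * (1 - ψ k)) * (G.ga - U) :=
        fun k => by ring
      simp only [this, Finset.sum_sub_distrib, Finset.sum_add_distrib, ← Finset.mul_sum, G.sc,
        ← e1, ← Finset.sum_mul, ← al_eq, ← be_eq]
      ring
    rw [this, t_eq]
    refine Finset.sum_le_sum fun k _ => mul_le_mul_of_nonneg_left ?_ (G.hc k)
    by_cases hk : C1 k
    · rw [dA_eq_one (hq' k hk)]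
      simp only [ψ, hk, if_true, sub_self, zero_mul, zero_add, add_zero]
      rw [hU, dB, Finset.sum_mul_sum]
      refine Finset.sum_le_sum fun i _ => Finset.sum_le_sum fun j _ => ?_
      rw [hq' k hk i]
      by_cases hi : A1 i
      · simp only [χ, hi, if_true, hr i hi j]; apply le_of_eq; ring
      · simp only [χ, hi, if_false, mul_zero, zero_mul]
        exact mul_nonneg (mul_nonneg (G.ha i) (G.hb j))
          (mul_nonneg (mul_nonneg zero_le_one (G.hp j k).1) (G.hr i j).1)
    · have := G.val_ge (G.q k) (fun j => G.p j k) (G.hq k) (fun j => G.hp j k)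
      have h6 : ∑ j, G.b j * G.p j k = 1 := dB_eq_one (hp k hk)
      have h7 : ∑ i, G.a i * G.q k i = G.dA k := rfl
      rw [h6, h7] at this
      rw [dB_eq_one (hp k hk)]
      simp only [ψ, hk, if_false, sub_zero, one_mul]
      linarith
  refine le_trans ?_ ht
  clear ht
  -- what remains is the Cauchy–Schwarz inequality in the plane
  obtain ⟨s, hs⟩ : ∃ s, G.ga = U + s := ⟨G.ga - U, by ring⟩
  obtain ⟨T, hT⟩ : ∃ T, G.al = (1 - v) + T := ⟨G.al - (1 - v), by ring⟩
  obtain ⟨V, hV⟩ : ∃ V, V = 1 - v := ⟨_, rfl⟩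
  have hs0 : 0 ≤ s := by linarith
  have hT0 : 0 ≤ T := by linarith
  have hV0 : 0 ≤ V := by linarith
  have hd0 : 0 ≤ 1 - G.be := by linarith [G.be_le]
  have hdUV : 1 - G.be ≤ U * V := by rw [hV]; linarith
  have hv' : v = 1 - V := by linarith
  unfold FF
  rw [hs, hT, hv'] at *
  have hg0 : 0 ≤ (U + s) * (V + T) := by positivity
  have hmul : Real.sqrt ((U + s) * (1 - (1 - V) + T) * (1 - G.be)) =
      Real.sqrt ((U + s) * (V + T)) * Real.sqrt (1 - G.be) := by
    rw [← Real.sqrt_mul hg0]; congr 1; ring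
  rw [hmul]
  have hg := Real.sq_sqrt hg0
  have hd := Real.sq_sqrt hd0
  have hh := Real.sq_sqrt (mul_nonneg hs0 hT0)
  have hm := Real.sq_sqrt (mul_nonneg hU0 hV0)
  have hgn := Real.sqrt_nonneg ((U + s) * (V + T))
  have hdn := Real.sqrt_nonneg (1 - G.be)
  have hhn := Real.sqrt_nonneg (s * T)
  have hmn := Real.sqrt_nonneg (U * V)
  have hdm : Real.sqrt (1 - G.be) ≤ Real.sqrt (U * V) := Real.sqrt_le_sqrt hdUV
  set g := Real.sqrt ((U + s) * (V + T))
  set d := Real.sqrt (1 - G.be)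
  set h := Real.sqrt (s * T)
  set m := Real.sqrt (U * V)
  have hhm : 2 * (h * m) ≤ s * V + T * U := by
    refine abs_le_of_sq_le_sq' ?_ (by positivity) |>.2
    nlinarith [sq_nonneg (s * V - T * U), congrArg₂ (· * ·) hh hm]
  have hsum : h + m ≤ g := by
    refine abs_le_of_sq_le_sq' ?_ hgn |>.2
    nlinarith
  have h1 : h ≤ g - d := by linarith
  nlinarith [mul_self_le_mul_self hhn h1]

/-- If neither `C` nor `A` has a vertex large in both directions, splitting `A` according to
the density into `C` and `C` according to the density into `B` gives the two-block structure of
`le_t_of_blocks`. -/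
theorem KKT.le_t {G : Cfg A B C} {X Y Z : ℝ} (h : G.KKT X Y Z) (hC : G.NoCirc X Y)
    (hA : G.rot.NoCirc Y Z) : FF G.ga G.al G.be ≤ G.t := by
  refine G.le_t_of_blocks (fun i => G.rot.dB i < Z) (fun k => G.dB k < Y) ?_ ?_ ?_ ?_
  · intro i hi j; exact h.rot.full_A hi j
  · intro i hi k; exact h.rot.full_B ((hA i).resolve_right hi) k
  · intro k hk i; exact h.full_A hk i
  · intro k hk j; exact h.full_B ((hC k).resolve_right hk) j

end Cfg

/-! ### The lower bound -/

/-- The inequality which rules out equal densities with all three bounds active. -/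
theorem symmetric_contra {x m d ξ η ζ u v w : ℝ} (hx : 1 / 2 < x) (hm : m = 1 - x - x ^ 2)
    (m0 : 0 < m) (hd : x * d = 2 * x - 1) (hs : ξ + η + ζ = d) (hξ : 0 ≤ ξ) (hη : 0 ≤ η)
    (hζ : 0 ≤ ζ) (h1 : (ξ + η) * m < ξ * η) (h2 : (η + ζ) * m < η * ζ) (h3 : (ζ + ξ) * m < ζ * ξ)
    (u0 : 0 ≤ u) (v0 : 0 ≤ v) (w0 : 0 ≤ w) (uX : u ≤ x + ξ) (vY : v ≤ x + η) (wZ : w ≤ x + ζ)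
    (hu : η + x ^ 2 * ζ ≤ u * (x + η - v)) (hv : ζ + x ^ 2 * ξ ≤ v * (x + ζ - w))
    (hw : ξ + x ^ 2 * η ≤ w * (x + ξ - u)) : False := by
  have x62 : x < 0.62 := by
    by_contra h
    have : 0.62 * 0.62 ≤ x * x := mul_self_le_mul_self (by norm_num) (not_lt.1 h)
    linarith
  have xp : 0 < x := by linarith
  have d0 : 0 < d := pos_of_mul_pos_right (by linarith : 0 < x * d) xp.le
  have hδ2 : x ^ 2 ≤ 0.62 ^ 2 := pow_le_pow_left₀ xp.le x62.le 2
  have hδ1 : x ^ 2 < 1 := by linarith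
  obtain ⟨q, hq⟩ : ∃ q, q = ξ * η + η * ζ + ζ * ξ := ⟨_, rfl⟩
  obtain ⟨r, hr⟩ : ∃ r, r = ξ * η * ζ := ⟨_, rfl⟩
  have r0 : 0 ≤ r := by rw [hr]; positivity
  have q0 : 0 ≤ q := by rw [hq]; positivity
  have hq1 : 2 * m * d ≤ q := by rw [hq, ← hs]; linarith
  have hq2 : 3 * q ≤ d ^ 2 := by
    rw [hq, ← hs]; nlinarith [sq_nonneg (ξ - η), sq_nonneg (η - ζ), sq_nonneg (ζ - ξ)]
  have hr1 : 9 * r ≤ q * d := by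
    rw [hq, hr, ← hs]
    nlinarith [mul_nonneg hξ (sq_nonneg (η - ζ)), mul_nonneg hη (sq_nonneg (ζ - ξ)),
      mul_nonneg hζ (sq_nonneg (ξ - η))]
  have hmd : 6 * m ≤ d := by
    have : 6 * m * d ≤ d * d := by linarith
    exact le_of_mul_le_mul_right this d0
  have x59 : 0.59 ≤ x := by
    by_contra h
    push Not at h
    have h5 : 6 * (1 - x - x ^ 2) * x ≤ 2 * x - 1 := by
      rw [← hm, ← hd, mul_comm x d]; exact mul_le_mul_of_nonneg_right hmd (by linarith)
    have h6 : 0 < (x - 1 / 2) * (0.59 - x) := mul_pos (sub_pos.2 hx) (sub_pos.2 h)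
    have h7 : x ^ 2 ≤ 1.09 * x - 0.295 := by linarith
    have h8 : x ^ 3 ≤ 0.59 * x ^ 2 := by
      have : x ^ 2 * x ≤ x ^ 2 * 0.59 := mul_le_mul_of_nonneg_left h.le (sq_nonneg x)
      linarith
    have h9 : 6 * (1 - x - x ^ 2) * x = 6 * x - 6 * x ^ 2 - 6 * x ^ 3 := by ring
    linarith
  have d3 : 0.3 ≤ d := by
    by_contra h
    have : x * d ≤ x * 0.3 := mul_le_mul_of_nonneg_left (not_le.1 h).le xp.le
    linarith
  have d4 : d ≤ 0.4 := by
    by_contra h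
    have : x * 0.4 ≤ x * d := mul_le_mul_of_nonneg_left (not_le.1 h).le xp.le
    linarith
  have hδ : 1 / 3 ≤ x ^ 2 := by
    have : 0.59 ^ 2 ≤ x ^ 2 := pow_le_pow_left₀ (by norm_num) x59 2
    linarith
  obtain ⟨W, hW⟩ : ∃ W, W = q * d := ⟨_, rfl⟩
  have q1 : 0 < q := by
    have : 0 < 2 * m * d := by positivity
    linarith
  have W0 : 0 < W := by rw [hW]; positivity
  have W1 : W ≤ 0.0214 := by
    have e0 : d ^ 2 ≤ 0.4 ^ 2 := pow_le_pow_left₀ d0.le d4 2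
    have e1 : q ≤ 0.16 / 3 := by linarith
    have e2 : q * d ≤ 0.16 / 3 * 0.4 := mul_le_mul e1 d4 d0.le (by norm_num)
    linarith
  have hmm : m ^ 2 ≤ 5 / 18 * W := by
    have e0 : 6 * m * m ≤ d * m := mul_le_mul_of_nonneg_right hmd m0.le
    have e1 : 12 * m ^ 2 ≤ q := by linarith
    have e2 : 3 / 10 * q ≤ W := by
      norm_num at d3
      rw [hW, mul_comm]; exact mul_le_mul_of_nonneg_left d3 q0
    linarith
  have m15 : m ≤ 1 / 15 := by linarith
  -- expand the product of the three thresholds along `X = u + (X - u)`, etc.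
  obtain ⟨s, hsd⟩ : ∃ s, s = u * v * w + (x + ξ - u) * (x + η - v) * (x + ζ - w) := ⟨_, rfl⟩
  have u1 : 0 ≤ x + ξ - u := by linarith
  have v1 : 0 ≤ x + η - v := by linarith
  have w1 : 0 ≤ x + ζ - w := by linarith
  have hs0 : 0 ≤ s := by rw [hsd]; positivity
  have hδ0 : 0 < x ^ 2 := by positivity
  have P1 : 0 ≤ η + x ^ 2 * ζ := by positivity
  have P2 : 0 ≤ ζ + x ^ 2 * ξ := by positivity
  have P3 : 0 ≤ ξ + x ^ 2 * η := by positivity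
  have hprod : (η + x ^ 2 * ζ) * (ζ + x ^ 2 * ξ) * (ξ + x ^ 2 * η) ≤
      (u * (x + η - v)) * (v * (x + ζ - w)) * (w * (x + ξ - u)) := by
    have := mul_le_mul hu hv P2 (by positivity)
    exact mul_le_mul this hw P3 (by positivity)
  have hs2 : 4 * ((η + x ^ 2 * ζ) * (ζ + x ^ 2 * ξ) * (ξ + x ^ 2 * η)) ≤ s ^ 2 := by
    have e : s ^ 2 - 4 * ((u * (x + η - v)) * (v * (x + ζ - w)) * (w * (x + ξ - u))) =
        (u * v * w - (x + ξ - u) * (x + η - v) * (x + ζ - w)) ^ 2 := by rw [hsd]; ring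
    have e2 := sq_nonneg (u * v * w - (x + ξ - u) * (x + η - v) * (x + ζ - w))
    linarith
  have hL : s ≤ x * m + r + W * (x * (1 + x)) := by
    have e1 := mul_le_mul_of_nonneg_left hu (show 0 ≤ x + ζ by linarith)
    have e2 := mul_le_mul_of_nonneg_left hv (show 0 ≤ x + ξ by linarith)
    have e3 := mul_le_mul_of_nonneg_left hw (show 0 ≤ x + η by linarith)
    have e4 : s = (x + ξ) * (x + η) * (x + ζ) - (x + ζ) * (u * (x + η - v)) -
      (x + ξ) * (v * (x + ζ - w)) - (x + η) * (w * (x + ξ - u)) := by rw [hsd]; ring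
    have e5 : (x + ξ) * (x + η) * (x + ζ) - (x + ζ) * (η + x ^ 2 * ζ) -
      (x + ξ) * (ζ + x ^ 2 * ξ) - (x + η) * (ξ + x ^ 2 * η) =
      x * m + r + W * (x * (1 + x)) := by
      have f1 : (x + ξ) * (x + η) * (x + ζ) - (x + ζ) * (η + x ^ 2 * ζ) -
        (x + ξ) * (ζ + x ^ 2 * ξ) - (x + η) * (ξ + x ^ 2 * η) =
        x ^ 3 + x * (x * (ξ + η + ζ)) + x * q + r - (x * (ξ + η + ζ)) * (1 + x ^ 2) - q
          - (x * (ξ + η + ζ)) ^ 2 + 2 * x ^ 2 * q := by rw [hq, hr]; ring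
      have f2 : W * (x * (1 + x)) = q * (x * d) * (1 + x) := by rw [hW]; ring
      rw [f1, f2, hs, hd, hm]; ring
    linarith
  have hL2 : s ≤ 0.62 * m + 10 / 9 * W := by
    have e1 : x * m ≤ 0.62 * m := mul_le_mul_of_nonneg_right x62.le m0.le
    have e2 : W * (x * (1 + x)) ≤ W := by
      apply mul_le_of_le_one_right W0.le; linarith
    linarith
  have hs3 : s ^ 2 ≤ 0.3 * W := by
    have e1 : s ^ 2 ≤ (0.62 * m + 10 / 9 * W) ^ 2 := by
      apply pow_le_pow_left₀ hs0 hL2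
    have e2 : m * W ≤ 1 / 15 * W := mul_le_mul_of_nonneg_right m15 W0.le
    have e3 : W * W ≤ 0.0214 * W := mul_le_mul_of_nonneg_right W1 W0.le
    have e4 : (0.62 * m + 10 / 9 * W) ^ 2 =
      0.3844 * m ^ 2 + 1240 / 900 * (m * W) + 100 / 81 * (W * W) := by ring
    linarith
  have hP : 4 / 9 * W ≤ 4 * ((η + x ^ 2 * ζ) * (ζ + x ^ 2 * ξ) * (ξ + x ^ 2 * η)) := by
    have e1 : (η + x ^ 2 * ζ) * (ζ + x ^ 2 * ξ) * (ξ + x ^ 2 * η) =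
      (x ^ 2) ^ 2 * W + r * (1 + (x ^ 2) ^ 3 - 3 * (x ^ 2) ^ 2) +
        (x ^ 2 - (x ^ 2) ^ 2) * (η ^ 2 * ζ + η * ξ ^ 2 + ζ ^ 2 * ξ) := by
      rw [hW, hr, hq, ← hs]; ring
    have e2 : 0 ≤ (x ^ 2 - (x ^ 2) ^ 2) * (η ^ 2 * ζ + η * ξ ^ 2 + ζ ^ 2 * ξ) := by
      apply mul_nonneg
      · have : x ^ 2 * x ^ 2 ≤ 1 * x ^ 2 := mul_le_mul_of_nonneg_right hδ1.le hδ0.le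
        linarith
      · positivity
    have e3 : 0 ≤ r * (1 + (x ^ 2) ^ 3 - 3 * (x ^ 2) ^ 2) := by
      apply mul_nonneg r0
      have f1 : (x ^ 2) ^ 2 ≤ (0.62 ^ 2) ^ 2 := pow_le_pow_left₀ hδ0.le hδ2 2
      have f2 : 0 ≤ (x ^ 2) ^ 3 := by positivity
      linarith
    have e4 : 1 / 9 * W ≤ (x ^ 2) ^ 2 * W := by
      apply mul_le_mul_of_nonneg_right _ W0.le
      have : (1 / 3 : ℝ) ^ 2 ≤ (x ^ 2) ^ 2 := pow_le_pow_left₀ (by norm_num) hδ 2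
      linarith
    linarith
  linarith

/-- Parametrization of the densities by the partial derivatives of `FF`. -/
theorem param {α β γ : ℝ} (ha : 0 < α) (hb : 0 < β) (hc : γ < 1) :
    ∃ x y z, FF1 α β γ = x ∧ FF2 α β γ = y ∧ FF3 α β γ = z ∧ 0 < x ∧ 0 < y ∧ z < 2 ∧
      α = y * (2 - z) ∧ β = x * (2 - z) ∧ γ = 1 - x * y ∧
      Real.sqrt (α * β * (1 - γ)) = x * y * (2 - z) := by
  have hc' : 0 < 1 - γ := by linarith
  have hpos : 0 < α * β * (1 - γ) := by positivity
  have hs := Real.sq_sqrt hpos.le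
  have hs0 := Real.sqrt_pos.2 hpos
  refine ⟨_, _, _, rfl, rfl, rfl, ?_, ?_, ?_, ?_, ?_, ?_, ?_⟩ <;> simp only [FF1, FF2, FF3] <;>
    set s := Real.sqrt (α * β * (1 - γ))
  · positivity
  · positivity
  · have : 0 < s / (1 - γ) := by positivity
    linarith
  · have : s / β * (2 - (2 - s / (1 - γ))) = s ^ 2 / (β * (1 - γ)) := by field_simp; ring
    rw [this, hs]; field_simp
  · have : s / α * (2 - (2 - s / (1 - γ))) = s ^ 2 / (α * (1 - γ)) := by field_simp; ring
    rw [this, hs]; field_simp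
  · have : s / α * (s / β) = s ^ 2 / (α * β) := by field_simp
    rw [this, hs]; field_simp; try ring
  · have : s / α * (s / β) * (2 - (2 - s / (1 - γ))) = s * (s ^ 2 / (α * β * (1 - γ))) := by
      field_simp; ring
    rw [this, hs, div_self hpos.ne', mul_one]

theorem FF_comm (x y z : ℝ) : FF x y z = FF y x z := by unfold FF; rw [mul_comm x y]

/-- In the region of interest the candidate bounds are ordered like the densities. -/
theorem FF_lt {α β γ : ℝ} (ha : 0 ≤ α) (hb : 0 ≤ β) (hc : 0 ≤ γ) (ha1 : α ≤ 1) (hc1 : γ ≤ 1)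
    (h1 : α + β + γ - 2 < FF α β γ) (h2 : α + β + γ - 2 < FF β γ α) (h : α < γ) :
    FF β γ α < FF α β γ := by
  unfold FF at *
  have n1 : 0 ≤ α * β * (1 - γ) := mul_nonneg (mul_nonneg ha hb) (by linarith)
  have n2 : 0 ≤ β * γ * (1 - α) := mul_nonneg (mul_nonneg hb hc) (by linarith)
  have s1 := Real.sq_sqrt n1
  have s2 := Real.sq_sqrt n2
  have p1 := Real.sqrt_nonneg (α * β * (1 - γ))
  have p2 := Real.sqrt_nonneg (β * γ * (1 - α))
  set s := Real.sqrt (α * β * (1 - γ))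
  set t := Real.sqrt (β * γ * (1 - α))
  have h3 : β < s + t := by linarith
  by_contra! hcon
  have h4 : γ - α ≤ t - s := by linarith
  have h5 : t ^ 2 - s ^ 2 = β * (γ - α) := by rw [s1, s2]; ring
  nlinarith

/-- In the parametrization `α = y * (2 - z)`, `β = x * (2 - z)`, `γ = 1 - x * y`, the multiplier `y`
exceeds one half as soon as `γ ≤ α` and the linear bound is smaller than `FF α β γ`. -/
theorem half_lt {x y z : ℝ} (hx : 0 < x) (hz : z < 2) (h : 1 - x * y ≤ y * (2 - z))
    (hL : y * (2 - z) + x * (2 - z) + (1 - x * y) - 2 <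
      2 * (x * y * (2 - z)) + 2 * (1 - x * y) - 2) : 1 / 2 < y := by
  by_contra! hy
  nlinarith [mul_nonneg (mul_pos hx (sub_pos.2 hz)).le (sub_nonneg.2 hy)]

namespace Cfg
variable {A B C : Type} [Fintype A] [Fintype B] [Fintype C]

/-- A configuration violating all three bounds which satisfies the first order conditions, the
multipliers coming from a convex combination of the gradients of the active bounds. -/
structure Bad (G : Cfg A B C) (θ₀ θ₁ θ₂ : ℝ) : Prop where
  n0 : 0 ≤ θ₀
  n1 : 0 ≤ θ₁
  n2 : 0 ≤ θ₂
  sum : θ₀ + θ₁ + θ₂ = 1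
  act0 : θ₀ ≠ 0 → FF G.al G.be G.ga ≤ FF G.be G.ga G.al ∧ FF G.al G.be G.ga ≤ FF G.ga G.al G.be
  act1 : θ₁ ≠ 0 → FF G.be G.ga G.al ≤ FF G.ga G.al G.be ∧ FF G.be G.ga G.al ≤ FF G.al G.be G.ga
  act2 : θ₂ ≠ 0 → FF G.ga G.al G.be ≤ FF G.al G.be G.ga ∧ FF G.ga G.al G.be ≤ FF G.be G.ga G.al
  lt0 : G.t < FF G.al G.be G.ga
  lt1 : G.t < FF G.be G.ga G.al
  lt2 : G.t < FF G.ga G.al G.be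
  kkt : G.KKT
    (θ₀ * FF1 G.al G.be G.ga + θ₁ * FF3 G.be G.ga G.al + θ₂ * FF2 G.ga G.al G.be)
    (θ₀ * FF2 G.al G.be G.ga + θ₁ * FF1 G.be G.ga G.al + θ₂ * FF3 G.ga G.al G.be)
    (θ₀ * FF3 G.al G.be G.ga + θ₁ * FF2 G.be G.ga G.al + θ₂ * FF1 G.ga G.al G.be)

theorem Bad.rot {G : Cfg A B C} {θ₀ θ₁ θ₂ : ℝ} (h : G.Bad θ₀ θ₁ θ₂) : G.rot.Bad θ₁ θ₂ θ₀ where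
  n0 := h.n1
  n1 := h.n2
  n2 := h.n0
  sum := by linarith [h.sum]
  act0 := h.act1
  act1 := h.act2
  act2 := h.act0
  lt0 := by rw [rot_t]; exact h.lt1
  lt1 := by rw [rot_t]; exact h.lt2
  lt2 := by rw [rot_t]; exact h.lt0
  kkt := by
    have := h.kkt.rot
    simp only [rot_al, rot_be, rot_ga]
    convert this using 1 <;> ring

/-- A violated bound has a positive square root, which keeps the densities away from the boundary. -/
theorem bounds_of_lt (G : Cfg A B C) (h : G.t < FF G.al G.be G.ga) :
    0 < G.al ∧ 0 < G.be ∧ G.ga < 1 := by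
  have h0 := G.t_nonneg
  have ha := G.al_nonneg
  have hb := G.be_nonneg
  have hc := G.ga_le
  unfold FF at h
  have hs : 0 < Real.sqrt (G.al * G.be * (1 - G.ga)) := by linarith
  have hp := Real.sqrt_pos.1 hs
  refine ⟨lt_of_le_of_ne ha fun e => ?_, lt_of_le_of_ne hb fun e => ?_,
    lt_of_le_of_ne hc fun e => ?_⟩
  · rw [← e] at hp; simp at hp
  · rw [← e] at hp; simp at hp
  · rw [e] at hp; simp at hp

section
variable {G : Cfg A B C} {θ₀ θ₁ θ₂ : ℝ}

theorem Bad.ga_le_al (h : G.Bad θ₀ θ₁ θ₂) (h0 : θ₀ ≠ 0) : G.ga ≤ G.al := by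
  by_contra! hcon
  have := FF_lt G.al_nonneg G.be_nonneg G.ga_nonneg G.al_le G.ga_le (G.t_ge.trans_lt h.lt0)
    (G.t_ge.trans_lt h.lt1) hcon
  linarith [(h.act0 h0).1]

theorem Bad.al_le_ga (h : G.Bad θ₀ θ₁ θ₂) (h1 : θ₁ ≠ 0) : G.al ≤ G.ga := by
  by_contra! hcon
  have e0 := h.lt0
  have e1 := h.lt1
  have e2 := (h.act1 h1).2
  rw [FF_comm] at e0 e1
  rw [FF_comm, FF_comm G.al] at e2
  have := FF_lt G.ga_nonneg G.be_nonneg G.al_nonneg G.ga_le G.al_le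
    (by linarith [G.t_ge]) (by linarith [G.t_ge]) hcon
  linarith

/-- Exactly one active bound. -/
theorem Bad.one (h : G.Bad θ₀ 0 0) : False := by
  have hθ : θ₀ = 1 := by linarith [h.sum]
  subst hθ
  obtain ⟨ha, hb, hc⟩ := G.bounds_of_lt h.lt0
  have hle := h.ga_le_al one_ne_zero
  have hk := h.kkt
  simp only [one_mul, zero_mul, add_zero] at hk
  have hL := G.t_ge.trans_lt h.lt0
  have ht := h.lt0
  have ht0 := G.t_nonneg
  obtain ⟨x, y, z, e1, e2, e3, hx, hy, hz, ea, eb, ec, es⟩ := param ha hb hc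
  rw [e1, e2, e3] at hk
  unfold FF at hL ht
  rw [es] at hL ht
  rw [ec, ea] at hle
  rw [ea, eb, ec] at hL
  rw [ec] at ht
  have hy2 := half_lt hx hz hle hL
  have hz1 : z < 1 := by
    by_contra! hcon
    nlinarith [mul_pos hx hy]
  have nC : G.NoCirc x y := hk.noCirc (by rw [ea, eb, ec]; nlinarith)
  have nA : G.rot.NoCirc y z := hk.rot.noCirc (by
    rw [rot_al, rot_be, rot_ga, rot_t, ea, eb, ec]
    nlinarith [mul_pos (sub_pos.2 hy2) (sub_pos.2 hz1)])
  exact absurd (hk.le_t nC nA) (not_le.2 h.lt2)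

/-- Exactly two active bounds. -/
theorem Bad.two (h : G.Bad θ₀ θ₁ 0) (h0 : θ₀ ≠ 0) (h1 : θ₁ ≠ 0) : False := by
  have hθ : θ₀ = 1 - θ₁ := by linarith [h.sum]
  obtain ⟨ha, hb, hc⟩ := G.bounds_of_lt h.lt0
  have hle := h.ga_le_al h0
  have heq : G.ga = G.al := le_antisymm hle (h.al_le_ga h1)
  have hk := h.kkt
  simp only [zero_mul, add_zero] at hk
  have hL := G.t_ge.trans_lt h.lt0
  have ht := h.lt0
  have ht0 := G.t_nonneg
  obtain ⟨x, y, z, e1, e2, e3, hx, hy, hz, ea, eb, ec, es⟩ := param ha hb hc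
  have f1 : FF1 G.be G.ga G.al = y := by
    rw [← e2]; unfold FF1 FF2; rw [heq, mul_comm G.be]
  have f2 : FF2 G.be G.ga G.al = x := by
    rw [← e1]; unfold FF1 FF2; rw [heq, mul_comm G.be]
  have f3 : FF3 G.be G.ga G.al = z := by
    rw [← e3]; unfold FF3; rw [heq, mul_comm G.be]
  rw [e1, e2, e3, f1, f2, f3] at hk
  unfold FF at hL ht
  rw [es] at hL ht
  rw [ec, ea] at hle heq
  rw [ea, eb, ec] at hL
  rw [ec] at ht
  have hy2 := half_lt hx hz hle hL
  have hz1 : z < 1 := by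
    by_contra! hcon
    nlinarith [mul_pos hx hy]
  have hzx : x ≤ z := by
    by_contra! hcon
    nlinarith
  have k0 : 0 ≤ θ₀ * ((z - x) * (y * (1 - z))) := mul_nonneg h.n0
    (mul_nonneg (by linarith) (mul_nonneg hy.le (by linarith)))
  have k1 : 0 ≤ θ₁ * ((z - x) * (y * (1 - z))) := mul_nonneg h.n1
    (mul_nonneg (by linarith) (mul_nonneg hy.le (by linarith)))
  have nC := hk.noCirc (by
    have : G.t - (θ₀ * x + θ₁ * z) * G.al - (θ₀ * y + θ₁ * y) * G.be + (1 - G.ga) +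
      (θ₀ * x + θ₁ * z) * (θ₀ * y + θ₁ * y) =
      G.t - (2 * (x * y * (2 - z)) + 2 * (1 - x * y) - 2) - θ₁ * ((z - x) * (y * (1 - z))) := by
      rw [ea, eb, ec, hθ]; ring
    rw [this]; linarith)
  have nA := hk.rot.noCirc (by
    have : G.rot.t - (θ₀ * y + θ₁ * y) * G.rot.al - (θ₀ * z + θ₁ * x) * G.rot.be + (1 - G.rot.ga) +
      (θ₀ * y + θ₁ * y) * (θ₀ * z + θ₁ * x) =
      G.t - (2 * (x * y * (2 - z)) + 2 * (1 - x * y) - 2) - θ₀ * ((z - x) * (y * (1 - z))) := by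
      rw [rot_t, rot_al, rot_be, rot_ga, ec, heq, eb, ea]
      have : y * (2 - z) - (1 - x * y) = 0 := by linarith
      have hθ' : θ₁ = 1 - θ₀ := by linarith
      rw [hθ']
      linear_combination (-1 : ℝ) * heq
    rw [this]; linarith)
  exact absurd (hk.le_t nC nA) (not_le.2 h.lt2)

theorem exists_dA_le (G : Cfg A B C) : ∃ k, G.dA k ≤ G.be := by
  by_contra! hcon
  have h1 : ∑ k, G.c k * (G.dA k - G.be) = 0 := by
    simp only [mul_sub, Finset.sum_sub_distrib, ← Finset.sum_mul, G.sc, ← be_eq]; ring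
  have h2 := (Finset.sum_eq_zero_iff_of_nonneg fun k _ =>
    mul_nonneg (G.hc k) (sub_nonneg.2 (hcon k).le)).1 h1
  have h3 : ∀ k, G.c k = 0 := fun k => by
    rcases mul_eq_zero.1 (h2 k (mem_univ k)) with h | h
    · exact h
    · linarith [hcon k]
  have := G.sc
  simp [h3] at this

/-- Data of the symmetric case: equal densities `1 - x²` and multipliers `x + ξ`, `x + η`,
`x + ζ`. -/
structure Sym (G : Cfg A B C) (x m d ξ η ζ : ℝ) : Prop where
  hx : 1 / 2 < x
  hm : m = 1 - x - x ^ 2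
  m0 : 0 < m
  hd : x * d = 2 * x - 1
  hs : ξ + η + ζ = d
  hξ : 0 ≤ ξ
  hη : 0 ≤ η
  hζ : 0 ≤ ζ
  ea : G.al = 1 - x ^ 2
  eb : G.be = 1 - x ^ 2
  ec : G.ga = 1 - x ^ 2
  ht : G.t < 2 * x * m
  ht' : G.t < FF (1 - x ^ 2) (1 - x ^ 2) (1 - x ^ 2)
  kkt : G.KKT (x + ξ) (x + η) (x + ζ)

theorem Sym.rot {x m d ξ η ζ : ℝ} (h : G.Sym x m d ξ η ζ) : G.rot.Sym x m d η ζ ξ :=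
  ⟨h.hx, h.hm, h.m0, h.hd, by linarith [h.hs], h.hη, h.hζ, h.hξ, h.eb, h.ec, h.ea,
    by rw [rot_t]; exact h.ht, by rw [rot_t]; exact h.ht', h.kkt.rot⟩

/-- The criterion `KKT.noCirc` in the symmetric case. -/
theorem Sym.kappa {x m d ξ η ζ : ℝ} (h : G.Sym x m d ξ η ζ)
    (hlt : ξ * η ≤ (ξ + η) * m) : G.NoCirc (x + ξ) (x + η) := by
  refine h.kkt.noCirc ?_
  rw [h.ea, h.eb, h.ec]
  have := h.ht
  rw [h.hm] at *
  nlinarith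

/-- In the symmetric case a single class without vertices large in both directions is impossible:
another class would have the same property, and `KKT.le_t` would apply. -/
theorem Sym.not_noCirc {x m d ξ η ζ : ℝ} (h : G.Sym x m d ξ η ζ) :
    ¬ G.rot.NoCirc (x + η) (x + ζ) := by
  intro hA
  have hC : G.NoCirc (x + ξ) (x + η) := by
    by_cases hX : ξ ≤ m
    · refine h.kappa ?_
      nlinarith [h.hξ, h.hη, h.m0, mul_nonneg h.hξ h.m0.le]
    · push Not at hX
      refine h.kkt.noCirc_of_rot hA ?_ ?_
      · obtain ⟨k, hk⟩ := G.exists_dA_le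
        refine ⟨k, hk.trans_lt ?_⟩
        rw [h.eb]; linarith [h.hm]
      · -- `x + d < 1` since `x * (x + d) = x ^ 2 + 2 * x - 1 = x - m`
        have h1 : x * (x + η) < x * 1 := by
          have : x * η ≤ x * d :=
            mul_le_mul_of_nonneg_left (by linarith [h.hs, h.hξ, h.hζ]) (by linarith [h.hx])
          nlinarith [h.hd, h.hm, h.m0]
        exact lt_of_mul_lt_mul_left h1 (by linarith [h.hx])
  have h1 := h.kkt.le_t hC hA
  rw [h.ea, h.eb, h.ec] at h1
  exact absurd h1 (not_le.2 h.ht')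

/-- By `Sym.not_noCirc` the criterion `Sym.kappa` fails at every class, and `KKT.triple` bounds the
weights of the vertices of small density; the two are incompatible by `symmetric_contra`. -/
theorem Sym.contra {x m d ξ η ζ : ℝ} (h : G.Sym x m d ξ η ζ) : False := by
  have kC : (ξ + η) * m < ξ * η := by
    by_contra! hcon; exact h.rot.rot.not_noCirc (h.kappa hcon)
  have kA : (η + ζ) * m < η * ζ := by
    by_contra! hcon; exact h.not_noCirc (h.rot.kappa hcon)
  have kB : (ζ + ξ) * m < ζ * ξ := by
    by_contra! hcon; exact h.rot.not_noCirc (h.rot.rot.kappa hcon)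
  have big : ∀ {a b : ℝ}, 0 ≤ a → 0 ≤ b → (a + b) * m < a * b → m < a := by
    intro a b ha hb hab
    by_contra! hcon
    nlinarith [mul_nonneg ha h.m0.le, mul_nonneg hb (sub_nonneg.2 hcon)]
  have bξ := big h.hξ h.hη kC
  have bη := big h.hη h.hζ kA
  have bζ := big h.hζ h.hξ kB
  have eC : ∃ k, G.dA k < x + ξ := by
    obtain ⟨k, hk⟩ := G.exists_dA_le
    exact ⟨k, hk.trans_lt (by rw [h.eb]; linarith [h.hm])⟩
  have eA : ∃ i, G.rot.dA i < x + η := by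
    obtain ⟨k, hk⟩ := G.rot.exists_dA_le
    exact ⟨k, hk.trans_lt (by rw [rot_be, h.ec]; linarith [h.hm])⟩
  have eB : ∃ j, G.rot.rot.dA j < x + ζ := by
    obtain ⟨k, hk⟩ := G.rot.rot.exists_dA_le
    exact ⟨k, hk.trans_lt (by rw [rot_be, rot_ga, h.ea]; linarith [h.hm])⟩
  have t1 := h.kkt.triple eC
  have t2 := h.kkt.rot.triple eA
  have t3 := h.kkt.rot.rot.triple eB
  have l1 : G.rot.low (x + η) ≤ x + ξ := by
    obtain ⟨k, hk⟩ := eC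
    exact (h.kkt.rot.low_le k).trans hk.le
  have l2 : G.rot.rot.low (x + ζ) ≤ x + η := by
    obtain ⟨k, hk⟩ := eA
    exact (h.kkt.rot.rot.low_le k).trans hk.le
  have l3 : G.low (x + ξ) ≤ x + ζ := by
    obtain ⟨k, hk⟩ := eB
    exact (h.kkt.low_le k).trans hk.le
  rw [rot_rot_rot] at t2 t3
  simp only [rot_t, rot_al, rot_be, rot_ga, h.ea, h.eb, h.ec] at t1 t2 t3
  have red : ∀ a b c : ℝ, a + b + c = d → b + x ^ 2 * c ≤
      (x + b) * (1 - x ^ 2) - (x + a) * (1 - (1 - x ^ 2)) - G.t := by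
    intro a b c hs
    have h1 := h.ht
    have h2 : x * (x * d) = x * (2 * x - 1) := by rw [h.hd]
    rw [← hs] at h2
    rw [h.hm] at h1
    nlinarith
  exact symmetric_contra h.hx h.hm h.m0 h.hd h.hs h.hξ h.hη h.hζ kC kA kB
    (G.rot.low_nonneg (x + η)) (G.rot.rot.low_nonneg (x + ζ)) (G.low_nonneg (x + ξ)) l1 l2 l3
    ((red ξ η ζ h.hs).trans t1) ((red η ζ ξ (by linarith [h.hs])).trans t2)
    ((red ζ ξ η (by linarith [h.hs])).trans t3)

/-- All three bounds active. -/
theorem Bad.three (h : G.Bad θ₀ θ₁ θ₂) (h0 : θ₀ ≠ 0) (h1 : θ₁ ≠ 0) (h2 : θ₂ ≠ 0) : False := by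
  obtain ⟨ha, hb, hc⟩ := G.bounds_of_lt h.lt0
  have hle := h.ga_le_al h0
  have e1 : G.ga = G.al := le_antisymm hle (h.al_le_ga h1)
  have e2 : G.be = G.al :=
    (le_antisymm (h.rot.ga_le_al h1) (h.rot.al_le_ga h2)).symm
  have hk := h.kkt
  have hL := G.t_ge.trans_lt h.lt0
  have ht := h.lt0
  have ht' := h.lt0
  have ht0 := G.t_nonneg
  obtain ⟨x, y, z, i1, i2, i3, hx, hy, hz, ea, eb, ec, es⟩ := param ha hb hc
  have hxy : y = x := by rw [← i1, ← i2]; unfold FF1 FF2; rw [e2]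
  subst hxy
  have ea' : G.al = 1 - y ^ 2 := by rw [← e1, ec]; ring
  rw [e2] at i1
  rw [e1] at i1 i3
  rw [e2] at i2 i3
  rw [e1] at i2
  rw [e1, e2, i1, i2, i3] at hk
  unfold FF at hL ht
  rw [es] at hL ht
  rw [ec, ea] at hle
  rw [ea, eb, ec] at hL
  rw [ec] at ht
  have hy2 := half_lt hx hz hle hL
  have hz1 : z < 1 := by
    by_contra! hcon
    nlinarith [mul_pos hx hy]
  have hyz : y * (2 - z) = 1 - y ^ 2 := by rw [← ea, ea']
  have hd : y * (z - y) = 2 * y - 1 := by linarith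
  have hd0 : 0 ≤ z - y := by
    by_contra! hcon
    nlinarith
  have hm : 1 - y - y ^ 2 = y * (1 - z) := by linarith
  have hSym : G.Sym y (1 - y - y ^ 2) (z - y) (θ₁ * (z - y)) (θ₂ * (z - y)) (θ₀ * (z - y)) :=
    { hx := hy2
      hm := rfl
      m0 := by rw [hm]; exact mul_pos hy (by linarith)
      hd := hd
      hs := by linear_combination (z - y) * h.sum
      hξ := mul_nonneg h.n1 hd0
      hη := mul_nonneg h.n2 hd0
      hζ := mul_nonneg h.n0 hd0
      ea := ea'
      eb := by rw [e2, ea']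
      ec := by rw [e1, ea']
      ht := by rw [hm]; linarith
      ht' := by rwa [e1, e2, ea'] at ht'
      kkt := by
        convert hk using 1
        · linear_combination (-y) * h.sum
        · linear_combination (-y) * h.sum
        · linear_combination (-y) * h.sum }
  exact hSym.contra

/-- The number of nonzero multipliers is one, two or three. -/
theorem not_bad (h : G.Bad θ₀ θ₁ θ₂) : False := by
  by_cases h0 : θ₀ = 0 <;> by_cases h1 : θ₁ = 0 <;> by_cases h2 : θ₂ = 0
  · have := h.sum; rw [h0, h1, h2] at this; norm_num at this
  · subst h0 h1; exact h.rot.rot.one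
  · subst h0 h2; exact h.rot.one
  · subst h0; exact h.rot.two h1 h2
  · subst h1 h2; exact h.one
  · subst h1; exact h.rot.rot.two h2 h0
  · subst h2; exact h.two h0 h1
  · exact h.three h0 h1 h2

end

/-- The lower bound on the triangle density. -/
theorem lower_bound (G : Cfg A B C) :
    FF G.al G.be G.ga ≤ G.t ∨ FF G.be G.ga G.al ≤ G.t ∨ FF G.ga G.al G.be ≤ G.t := by
  obtain ⟨I, J, K, _, _, _, H, pa, pb, pc, hmin⟩ := exists_minimizer excess continuous_excess
  by_contra! hcon
  have hneg : excess H.al H.be H.ga H.t < 0 := by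
    refine (hmin A B C G).trans_lt (excess_lt_iff.2 fun i => ?_)
    fin_cases i
    · simpa [bnd] using hcon.1
    · simpa [bnd] using hcon.2.1
    · simpa [bnd] using hcon.2.2
  have hlt := excess_lt_iff.1 hneg
  have l0 : H.t < FF H.al H.be H.ga := by simpa [bnd] using hlt 0
  have l1 : H.t < FF H.be H.ga H.al := by simpa [bnd] using hlt 1
  have l2 : H.t < FF H.ga H.al H.be := by simpa [bnd] using hlt 2
  obtain ⟨a0, b0, c1⟩ := H.bounds_of_lt l0
  obtain ⟨-, c0, a1⟩ := H.rot.bounds_of_lt (by rw [rot_t]; exact l1)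
  obtain ⟨-, -, b1⟩ := H.rot.rot.bounds_of_lt (by rw [rot_t, rot_t]; exact l2)
  obtain ⟨θ, hθ, hsum, hact, k1, k2, k3⟩ := H.kkt a0 b0 c0 a1 b1 c1 hmin
  have hbad : H.Bad (θ 0) (θ 1) (θ 2) :=
    { n0 := hθ 0
      n1 := hθ 1
      n2 := hθ 2
      sum := by rw [← hsum, Fin.sum_univ_three]
      act0 := fun h => ⟨by simpa [bnd] using hact 0 h 1, by simpa [bnd] using hact 0 h 2⟩
      act1 := fun h => ⟨by simpa [bnd] using hact 1 h 2, by simpa [bnd] using hact 1 h 0⟩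
      act2 := fun h => ⟨by simpa [bnd] using hact 2 h 0, by simpa [bnd] using hact 2 h 1⟩
      lt0 := l0
      lt1 := l1
      lt2 := l2
      kkt := by
        simp only [Fin.sum_univ_three, bndA, bndB, bndC, Matrix.cons_val_zero,
          Matrix.cons_val_one, Matrix.cons_val] at k1 k2 k3
        exact ⟨pa, pb, pc, k1, k2, k3⟩ }
  exact not_bad hbad

end Cfg

/-! ### Embedding of weighted tripartite graphs and the optimal graphs -/

section Embedding
variable {n : ℕ}

/-- The weighted tripartite graph `(G, W)` as a configuration. All three classes are indexed by
the whole vertex set, vertices outside a class having weight zero in it. -/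
noncomputable def toCfg (G : TriGraph n) (W : Weighting G) : Cfg (Fin n) (Fin n) (Fin n) where
  a v := if G.cls v = 0 then W.w v else 0
  b v := if G.cls v = 1 then W.w v else 0
  c v := if G.cls v = 2 then W.w v else 0
  p u v := if G.adj u v then 1 else 0
  q u v := if G.adj u v then 1 else 0
  r u v := if G.adj u v then 1 else 0
  ha v := by split_ifs; exacts [W.nonneg v, le_rfl]
  hb v := by split_ifs; exacts [W.nonneg v, le_rfl]
  hc v := by split_ifs; exacts [W.nonneg v, le_rfl]
  sa := by rw [← Finset.sum_filter]; exact W.sum_one 0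
  sb := by rw [← Finset.sum_filter]; exact W.sum_one 1
  sc := by rw [← Finset.sum_filter]; exact W.sum_one 2
  hp u v := by split_ifs <;> simp
  hq u v := by split_ifs <;> simp
  hr u v := by split_ifs <;> simp

theorem toCfg_al (G : TriGraph n) (W : Weighting G) : (toCfg G W).al = edgeDensity G W.w 1 2 := by
  unfold Cfg.al edgeDensity classSet toCfg
  simp only [Finset.sum_filter]
  refine Finset.sum_congr rfl fun u _ => ?_
  by_cases hu : G.cls u = 1 <;> simp only [hu, if_true, if_false, zero_mul, Finset.sum_const_zero]
  refine Finset.sum_congr rfl fun v _ => ?_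
  split_ifs <;> simp

theorem toCfg_be (G : TriGraph n) (W : Weighting G) : (toCfg G W).be = edgeDensity G W.w 0 2 := by
  unfold Cfg.be edgeDensity classSet toCfg
  rw [Finset.sum_comm]
  simp only [Finset.sum_filter]
  refine Finset.sum_congr rfl fun u _ => ?_
  by_cases hu : G.cls u = 0 <;>
    simp only [hu, if_true, if_false, zero_mul, mul_zero, Finset.sum_const_zero]
  refine Finset.sum_congr rfl fun v _ => ?_
  rw [G.symm v u]
  split_ifs <;> simp [mul_comm]

theorem toCfg_ga (G : TriGraph n) (W : Weighting G) : (toCfg G W).ga = edgeDensity G W.w 0 1 := by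
  unfold Cfg.ga edgeDensity classSet toCfg
  simp only [Finset.sum_filter]
  refine Finset.sum_congr rfl fun u _ => ?_
  by_cases hu : G.cls u = 0 <;> simp only [hu, if_true, if_false, zero_mul, Finset.sum_const_zero]
  refine Finset.sum_congr rfl fun v _ => ?_
  split_ifs <;> simp

theorem toCfg_t (G : TriGraph n) (W : Weighting G) : (toCfg G W).t = triDensity G W.w := by
  unfold Cfg.t triDensity classSet toCfg
  simp only [Finset.sum_filter]
  refine Finset.sum_congr rfl fun u _ => ?_
  by_cases hu : G.cls u = 0 <;> simp only [hu, if_true, if_false, zero_mul, Finset.sum_const_zero]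
  refine Finset.sum_congr rfl fun v _ => ?_
  by_cases hv : G.cls v = 1 <;>
    simp only [hv, if_true, if_false, zero_mul, mul_zero, Finset.sum_const_zero]
  refine Finset.sum_congr rfl fun z _ => ?_
  rw [G.symm z u]
  cases G.adj u v <;> cases G.adj u z <;> cases G.adj v z <;> simp

end Embedding

/-- The weights of a class, being nonnegative with sum one, are at most one. -/
def mkWeighting {n : ℕ} (G : TriGraph n) (w : Fin n → ℝ) (h0 : ∀ v, 0 ≤ w v)
    (h1 : ∀ i : Fin 3, ∑ v ∈ classSet G i, w v = 1) : Weighting G where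
  w := w
  nonneg := h0
  le_one v := by
    rw [← h1 (G.cls v)]
    exact Finset.single_le_sum (f := w) (fun i _ => h0 i) (by simp [classSet])
  sum_one := h1

/-- The minimum is determined by an explicit weighting together with a lower bound valid for all
configurations. -/
theorem Tmin_eq {α β γ τ : ℝ} {n : ℕ} (G : TriGraph n) (w : Fin n → ℝ) (h0 : ∀ v, 0 ≤ w v)
    (h1 : ∀ i : Fin 3, ∑ v ∈ classSet G i, w v = 1) (hα : edgeDensity G w 1 2 = α)
    (hβ : edgeDensity G w 0 2 = β) (hγ : edgeDensity G w 0 1 = γ) (hτ : triDensity G w = τ)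
    (hlow : ∀ (A : Type) [Fintype A] (H : Cfg A A A), H.al = α → H.be = β → H.ga = γ → τ ≤ H.t) :
    Tmin α β γ = τ := by
  refine IsLeast.csInf_eq ⟨⟨n, G, mkWeighting G w h0 h1, ⟨hα, hβ, hγ⟩, hτ⟩, ?_⟩
  rintro t ⟨m, H, W, ⟨h2, h3, h4⟩, rfl⟩
  rw [← toCfg_t]
  exact hlow _ (toCfg H W) ((toCfg_al H W).trans h2) ((toCfg_be H W).trans h3)
    ((toCfg_ga H W).trans h4)

/-! ### Optimal graphs -/

theorem forall_fin3 {P : Fin 3 → Prop} (h0 : P 0) (h1 : P 1) (h2 : P 2) : ∀ i, P i := by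
  intro i; fin_cases i <;> assumption

/-- Evaluation of the densities of `H6`. -/
theorem H6_dens (w : Fin 6 → ℝ) :
    (∑ v ∈ classSet H6 0, w v = w 0 + w 1 ∧ ∑ v ∈ classSet H6 1, w v = w 2 + w 3 ∧
      ∑ v ∈ classSet H6 2, w v = w 4 + w 5) ∧
    edgeDensity H6 w 1 2 = w 2 * w 4 + w 2 * w 5 + w 3 * w 5 ∧
    edgeDensity H6 w 0 2 = w 0 * w 4 + w 1 * w 4 + w 1 * w 5 ∧
    edgeDensity H6 w 0 1 = w 0 * w 2 + w 0 * w 3 + w 1 * w 3 ∧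
    triDensity H6 w = w 0 * w 2 * w 4 + w 1 * w 3 * w 5 := by
  have e0 : classSet H6 0 = {0, 1} := by decide
  have e1 : classSet H6 1 = {2, 3} := by decide
  have e2 : classSet H6 2 = {4, 5} := by decide
  simp only [edgeDensity, triDensity, e0, e1, e2]
  simp [H6, mkAdj]
  ring_nf

theorem H7_dens (w : Fin 7 → ℝ) :
    (∑ v ∈ classSet H7 0, w v = w 0 + w 1 ∧ ∑ v ∈ classSet H7 1, w v = w 2 + w 3 ∧
      ∑ v ∈ classSet H7 2, w v = w 4 + w 5 + w 6) ∧
    edgeDensity H7 w 1 2 = w 2 * (w 4 + w 5 + w 6) + w 3 * w 6 ∧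
    edgeDensity H7 w 0 2 = w 0 * w 4 + w 1 * (w 4 + w 5 + w 6) ∧
    edgeDensity H7 w 0 1 = w 0 * w 2 + w 0 * w 3 + w 1 * w 3 ∧
    triDensity H7 w = w 0 * w 2 * w 4 + w 1 * w 3 * w 6 := by
  have e0 : classSet H7 0 = {0, 1} := by decide
  have e1 : classSet H7 1 = {2, 3} := by decide
  have e2 : classSet H7 2 = {4, 5, 6} := by decide
  simp only [edgeDensity, triDensity, e0, e1, e2]
  simp [H7, mkAdj]
  ring_nf
  trivial

/-- A triangle-free graph with classes `{0, 1, 2, 3}`, `{4, 5}`, `{6}`. -/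
def T7 : TriGraph 7 where
  cls := ![0, 0, 0, 0, 1, 1, 2]
  adj := mkAdj ![0, 0, 0, 0, 1, 1, 2]
    [(2, 6), (3, 6), (5, 6), (0, 4), (1, 4), (1, 5), (3, 4), (3, 5)]
  symm := by decide
  tripart := by decide

theorem T7_dens (w : Fin 7 → ℝ) :
    (∑ v ∈ classSet T7 0, w v = w 0 + w 1 + w 2 + w 3 ∧ ∑ v ∈ classSet T7 1, w v = w 4 + w 5 ∧
      ∑ v ∈ classSet T7 2, w v = w 6) ∧
    edgeDensity T7 w 1 2 = w 4 * w 6 ∧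
    edgeDensity T7 w 0 2 = w 0 * w 6 + w 1 * w 6 ∧
    edgeDensity T7 w 0 1 = w 0 * w 5 + w 2 * w 4 + w 2 * w 5 ∧
    triDensity T7 w = 0 := by
  have e0 : classSet T7 0 = {0, 1, 2, 3} := by decide
  have e1 : classSet T7 1 = {4, 5} := by decide
  have e2 : classSet T7 2 = {6} := by decide
  simp only [edgeDensity, triDensity, e0, e1, e2]
  simp [T7, mkAdj]
  ring_nf
  trivial

/-! ### The minimal triangle density -/

/-- The inequality is `α + β - γ < 2 * √(α * β * (1 - γ))`; squared, the difference of the two sides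
is `Δ`. -/
theorem lt_FF {α β γ : ℝ} (h : Delta α β γ < 0) : α + β + γ - 2 < FF α β γ := by
  have : α + β - γ < 2 * Real.sqrt (α * β * (1 - γ)) := by
    have h1 : (α + β - γ) / 2 < Real.sqrt (α * β * (1 - γ)) := by
      apply Real.lt_sqrt_of_sq_lt
      unfold Delta at h
      linarith
    linarith
  unfold FF
  linarith

theorem Delta_rot (α β γ : ℝ) : Delta β γ α = Delta α β γ := by unfold Delta; ring

/-- On `R₂` the smallest of the three candidate bounds is the one whose last argument is the smallest
density, and `H7` attains it: in the parametrization of `param`, the classes `A` and `B` are split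
in the ratios `1 - x : x` and `y : 1 - y`, and the weights `p`, `q` in `C` are chosen so as to give
the densities `β` and `α`. -/
theorem Tmin_R2 {α β γ : ℝ} (h : inR2 α β γ) (hα : γ ≤ α) (hβ : γ ≤ β) :
    Tmin α β γ = FF α β γ := by
  obtain ⟨⟨⟨⟨ha0, ha1⟩, ⟨hb0, hb1⟩, ⟨hc0, hc1⟩⟩, hR, hR', hR''⟩, hΔ⟩ := h
  have l1 := lt_FF hΔ
  have l2 : β + γ + α - 2 < FF β γ α := lt_FF (by rwa [Delta_rot])
  have l3 : γ + α + β - 2 < FF γ α β := lt_FF (by rwa [Delta_rot, Delta_rot])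
  have o1 : FF α β γ ≤ FF β γ α := by
    rcases hα.eq_or_lt with rfl | hlt
    · exact (FF_comm _ _ _).le
    · have := FF_lt (α := γ) (β := β) (γ := α) hc0 hb0 ha0 hc1 ha1
        (by rw [FF_comm]; linarith) (by rw [FF_comm]; linarith) hlt
      rw [FF_comm α, FF_comm β γ]; exact this.le
  have o2 : FF α β γ ≤ FF γ α β := by
    rcases hβ.eq_or_lt with rfl | hlt
    · exact (FF_comm _ _ _).le
    · exact (FF_lt (α := γ) (β := α) (γ := β) hc0 ha0 hb0 hc1 hb1
        (by linarith) (by linarith) hlt).le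
  have ha : 0 < α := by nlinarith
  have hb : 0 < β := by nlinarith
  have hc : γ < 1 := by
    by_contra hcon
    have e1 : γ = 1 := by linarith
    have e2 : α = 1 := by linarith
    have e3 : β = 1 := by linarith
    rw [e1, e2, e3] at hΔ
    norm_num [Delta] at hΔ
  obtain ⟨x, y, z, -, -, -, x0, y0, z2, eα, eβ, eγ, es⟩ := param ha hb hc
  have eF : FF α β γ = 2 * (x * y * (1 - z)) := by unfold FF; rw [es, eγ]; ring
  rw [eF]
  have xy0 : 0 < x * y := mul_pos x0 y0
  have z1 : z < 1 := by
    by_contra! hz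
    have e1 : 1 < (2 - z) ^ 2 := by
      have : x * y * 1 < x * y * (2 - z) ^ 2 := by rw [eα, eβ, eγ] at hR; linarith
      exact lt_of_mul_lt_mul_left this xy0.le
    nlinarith
  have x1 : x < 1 := by nlinarith
  have y1 : y < 1 := by nlinarith
  have hx : 0 < 1 - x := by linarith
  have hy : 0 < 1 - y := by linarith
  have hz : 0 < 1 - z := by linarith
  have key : x * (1 - z) / (1 - x) + y * (1 - z) / (1 - y) ≤ 1 := by
    rw [div_add_div _ _ hx.ne' hy.ne', div_le_one (mul_pos hx hy)]
    rw [eF, eα, eβ, eγ] at l1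
    linarith
  obtain ⟨p, hp⟩ : ∃ p, p = x * (1 - z) / (1 - x) := ⟨_, rfl⟩
  obtain ⟨q, hq⟩ : ∃ q, q = y * (1 - z) / (1 - y) := ⟨_, rfl⟩
  have p0 : 0 ≤ p := by rw [hp]; positivity
  have q0 : 0 ≤ q := by rw [hq]; positivity
  rw [← hp, ← hq] at key
  have hp' : p * (1 - x) = x * (1 - z) := by rw [hp]; field_simp
  have hq' : q * (1 - y) = y * (1 - z) := by rw [hq]; field_simp
  obtain ⟨⟨d0, d1, d2⟩, d3, d4, d5, d6⟩ := H7_dens ![1 - x, x, y, 1 - y, p, 1 - p - q, q]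
  simp at d0 d1 d2 d3 d4 d5 d6
  refine Tmin_eq H7 ![1 - x, x, y, 1 - y, p, 1 - p - q, q] ?_ (forall_fin3 ?_ ?_ ?_)
    ?_ ?_ ?_ ?_ ?_
  · intro v
    fin_cases v <;> simp <;> linarith
  · rw [d0]
  · rw [d1]
  · rw [d2]; ring
  · rw [d3, eα]; linarith
  · rw [d4, eβ]; linarith
  · rw [d5, eγ]; ring
  · rw [d6]; linear_combination y * hp' + x * hq'
  · intro A _ H h1 h2 h3
    have := H.lower_bound
    rw [h1, h2, h3] at this
    rw [← eF]
    rcases this with h | h | h <;> linarith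

/-- On `R₁` the linear bound is attained by `H6`, in which no triple contains two nonadjacent pairs.
The split ratios of the three classes solve `x * y = 1 - γ`, `(1 - y) * p = 1 - α`,
`(1 - x) * (1 - p) = 1 - β`, a quadratic system with discriminant `Δ`. -/
theorem Tmin_R1 {α β γ : ℝ} (h : inR1 α β γ) : Tmin α β γ = α + β + γ - 2 := by
  obtain ⟨⟨⟨⟨ha0, ha1⟩, ⟨hb0, hb1⟩, ⟨hc0, hc1⟩⟩, hR, hR', hR''⟩, hΔ⟩ := h
  have ha : 0 < α := by nlinarith
  have hb : 0 < β := by nlinarith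
  have hc : 0 < γ := by nlinarith
  have u0 : 0 < α + β - γ := by nlinarith
  have v0 : 0 < β + γ - α := by nlinarith
  have w0 : 0 < γ + α - β := by nlinarith
  have D0 := Real.sqrt_nonneg (Delta α β γ)
  have D2 := Real.sq_sqrt hΔ
  set D := Real.sqrt (Delta α β γ)
  unfold Delta at D2
  have Du : D ≤ α + β - γ := by
    apply le_of_sq_le_sq _ u0.le
    nlinarith [mul_nonneg (mul_nonneg ha0 hb0) (sub_nonneg.2 hc1)]
  have Dv : D ≤ β + γ - α := by
    apply le_of_sq_le_sq _ v0.le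
    nlinarith [mul_nonneg (mul_nonneg hb0 hc0) (sub_nonneg.2 ha1)]
  have Dw : D ≤ γ + α - β := by
    apply le_of_sq_le_sq _ w0.le
    nlinarith [mul_nonneg (mul_nonneg hc0 ha0) (sub_nonneg.2 hb1)]
  obtain ⟨x, hx⟩ : ∃ x, x = (α + β - γ - D) / (2 * α) := ⟨_, rfl⟩
  obtain ⟨y, hy⟩ : ∃ y, y = (α + β - γ + D) / (2 * β) := ⟨_, rfl⟩
  obtain ⟨p, hp⟩ : ∃ p, p = (β + γ - α + D) / (2 * γ) := ⟨_, rfl⟩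
  have hx' : 1 - x = (γ + α - β + D) / (2 * α) := by rw [hx]; field_simp; ring
  have hy' : 1 - y = (β + γ - α - D) / (2 * β) := by rw [hy]; field_simp; ring
  have hp' : 1 - p = (γ + α - β - D) / (2 * γ) := by rw [hp]; field_simp; ring
  have x0 : 0 ≤ x := by rw [hx]; exact div_nonneg (by linarith) (by linarith)
  have y0 : 0 ≤ y := by rw [hy]; exact div_nonneg (by linarith) (by linarith)
  have p0 : 0 ≤ p := by rw [hp]; exact div_nonneg (by linarith) (by linarith)
  have x1 : 0 ≤ 1 - x := by rw [hx']; exact div_nonneg (by linarith) (by linarith)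
  have y1 : 0 ≤ 1 - y := by rw [hy']; exact div_nonneg (by linarith) (by linarith)
  have p1 : 0 ≤ 1 - p := by rw [hp']; exact div_nonneg (by linarith) (by linarith)
  have e1 : x * y = 1 - γ := by
    rw [hx, hy, div_mul_div_comm, div_eq_iff (by positivity)]; linear_combination -D2
  have e2 : (1 - y) * p = 1 - α := by
    rw [hy', hp, div_mul_div_comm, div_eq_iff (by positivity)]; linear_combination -D2
  have e3 : (1 - x) * (1 - p) = 1 - β := by
    rw [hx', hp', div_mul_div_comm, div_eq_iff (by positivity)]; linear_combination -D2
  obtain ⟨⟨d0, d1, d2⟩, d3, d4, d5, d6⟩ := H6_dens ![1 - x, x, y, 1 - y, p, 1 - p]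
  simp at d0 d1 d2 d3 d4 d5 d6
  refine Tmin_eq H6 ![1 - x, x, y, 1 - y, p, 1 - p] ?_ (forall_fin3 ?_ ?_ ?_)
    ?_ ?_ ?_ ?_ ?_
  · intro v
    fin_cases v <;> simp <;> linarith
  · rw [d0]
  · rw [d1]
  · rw [d2]
  · rw [d3]; linear_combination -e2
  · rw [d4]; linear_combination -e3
  · rw [d5]; linear_combination -e1
  · rw [d6]; linear_combination -e1 - e2 - e3
  · intro A _ H h1 h2 h3
    rw [← h1, ← h2, ← h3]
    exact H.t_ge

/-- If `α * β + γ ≤ 1` the densities are realized by the triangle-free graph `T7`: one vertex of `C`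
has neighbourhoods of weight `β` in `A` and `α` in `B`, and a proportion `k` of the
remaining pairs, of total weight `1 - α * β`, is joined. -/
theorem Tmin_zero {α β γ : ℝ} (h : inCube α β γ) (hαβ : α * β + γ ≤ 1) : Tmin α β γ = 0 := by
  obtain ⟨⟨ha0, ha1⟩, ⟨hb0, hb1⟩, ⟨hc0, hc1⟩⟩ := h
  obtain ⟨k, k0, k1, hk⟩ : ∃ k : ℝ, 0 ≤ k ∧ k ≤ 1 ∧ k * (1 - α * β) = γ := by
    rcases (sub_nonneg.2 (mul_le_one₀ ha1 hb0 hb1)).eq_or_lt with h1 | h1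
    · exact ⟨0, le_rfl, zero_le_one, by linarith⟩
    · exact ⟨γ / (1 - α * β), by positivity, by rw [div_le_one h1]; linarith, by field_simp⟩
  have k1' : 0 ≤ 1 - k := by linarith
  have a1' : 0 ≤ 1 - α := by linarith
  have b1' : 0 ≤ 1 - β := by linarith
  obtain ⟨⟨d0, d1, d2⟩, d3, d4, d5, d6⟩ :=
    T7_dens ![k * β, (1 - k) * β, k * (1 - β), (1 - k) * (1 - β), α, 1 - α, 1]
  simp at d0 d1 d2 d3 d4 d5 d6
  refine Tmin_eq T7 ![k * β, (1 - k) * β, k * (1 - β), (1 - k) * (1 - β), α, 1 - α, 1]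
    ?_ (forall_fin3 ?_ ?_ ?_) ?_ ?_ ?_ ?_ ?_
  · intro v
    fin_cases v <;> simp <;> first | assumption | positivity
  · rw [d0]; ring
  · rw [d1]
  · rw [d2]
  · rw [d3]
  · rw [d4]; ring
  · rw [d5, ← hk]; ring
  · exact d6
  · intro A _ H _ _ _
    exact H.t_nonneg

/-- When `γ` is the smallest density, the first of the inequalities defining `R` is the strongest. -/
theorem not_inR {α β γ : ℝ} (h : inCube α β γ) (hα : γ ≤ α) (hβ : γ ≤ β) (hR : ¬ inR α β γ) :
    α * β + γ ≤ 1 := by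
  by_contra! hcon
  obtain ⟨⟨ha0, ha1⟩, ⟨hb0, hb1⟩, ⟨hc0, hc1⟩⟩ := h
  refine hR ⟨⟨⟨ha0, ha1⟩, ⟨hb0, hb1⟩, ⟨hc0, hc1⟩⟩, hcon, ?_, ?_⟩
  · nlinarith [mul_nonneg (sub_nonneg.2 ha1) (sub_nonneg.2 hβ)]
  · nlinarith [mul_nonneg (sub_nonneg.2 hb1) (sub_nonneg.2 hα)]

end TriDens

/-- If for every (α,β,γ) ∈ R₂ no weighting of H₉ in Tri(α,β,γ) is both
extremal and vertex minimal, then for all α, β, γ ∈ [0,1] with γ ≤ α and γ ≤ β: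
T_min = 0 off R; T_min = 2√(αβ(1−γ)) + 2γ − 2 on R₂; and T_min = α+β+γ−2 otherwise. -/
theorem stmt19
    (hyp : ∀ α β γ : ℝ, inR2 α β γ → ∀ W : Weighting H9, InTri H9 W α β γ →
      ¬ Extremal H9 W α β γ ∨ ¬ VertexMinimal H9 W α β γ) :
    ∀ α β γ : ℝ, inCube α β γ → γ ≤ α → γ ≤ β →
      (¬ inR α β γ → Tmin α β γ = 0) ∧
      (inR2 α β γ → Tmin α β γ = 2 * Real.sqrt (α * β * (1 - γ)) + 2 * γ - 2) ∧
      (inR α β γ ∧ ¬ inR2 α β γ → Tmin α β γ = α + β + γ - 2) := by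
  intro α β γ hcube hα hβ
  refine ⟨fun hR => ?_, fun hR => ?_, fun hR => ?_⟩
  · exact TriDens.Tmin_zero hcube (TriDens.not_inR hcube hα hβ hR)
  · exact TriDens.Tmin_R2 hR hα hβ
  · exact TriDens.Tmin_R1 ⟨hR.1, le_of_not_gt fun h => hR.2 ⟨hR.1, h⟩⟩
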